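/- Let {X_t}_{t≥1} be identically distributed, pairwise asymptotically independent positive random variables and {Θ_t}_{t≥1} positive random variables with the sequence {Θ_t} independent of the sequence {X_t}, such that X_(∞) = Σ_{t=1}^∞ Θ_t X_t is finite almost surely and has a regularly varying tail of index −α for some α>0. Suppose {Θ_t} satisfies the RW moment conditions for α, and that Σ_{t=1}^∞ E[Θ_t^{α+iβ}] ≠ 0 for every β∈ℝ (here Θ^{α+iβ} = exp((α+iβ)·log Θ); under the RW conditions this series converges absolutely). Then X₁ has a regularly varying tail of index −α and P[X_(∞) > x] ~ P[X₁ > x] · Σ_{t=1}^∞ E[Θ_t^α] as x→∞. -/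

import Mathlib

open MeasureTheory ProbabilityTheory Filter Topology
open scoped ENNReal

noncomputable section

/-- A function, positive on `(0,∞)`, is regularly varying at infinity with index `ρ`:
for every `t > 0`, `f(tx)/f(x) → t^ρ` as `x → ∞`. -/
def RegVarying (f : ℝ → ℝ) (ρ : ℝ) : Prop :=
  (∀ x : ℝ, 0 < x → 0 < f x) ∧
    ∀ t : ℝ, 0 < t → Tendsto (fun x : ℝ => f (t * x) / f x) atTop (nhds (t ^ ρ))

variable {Ω : Type*} [MeasurableSpace Ω]

/-- The (possibly infinite) moment `E[Θ^r]`. -/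
def momE (P : Measure Ω) (Θ : Ω → ℝ) (r : ℝ) : ℝ≥0∞ :=
  ∫⁻ ω, ENNReal.ofReal (Θ ω ^ r) ∂P

/-- The RW moment conditions for the sequence `{Θ_t}` and the index `α`:
if `0 < α < 1`, then `Σ_t E[Θ_t^{α+ε} + Θ_t^{α-ε}] < ∞` for some `ε ∈ (0,α)`;
if `α ≥ 1`, then `Σ_t (E[Θ_t^{α+ε} + Θ_t^{α-ε}])^{1/(α+ε)} < ∞` for some `ε ∈ (0,α)`. -/
def RWConditions (P : Measure Ω) (Θ : ℕ → Ω → ℝ) (α : ℝ) : Prop :=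
  ∃ ε : ℝ, 0 < ε ∧ ε < α ∧
    ((α < 1 ∧ (∑' t : ℕ, (momE P (Θ t) (α + ε) + momE P (Θ t) (α - ε))) ≠ ⊤) ∨
      (1 ≤ α ∧
        (∑' t : ℕ, (momE P (Θ t) (α + ε) + momE P (Θ t) (α - ε)) ^ (1 / (α + ε))) ≠ ⊤))

/-- The tail `P[Z > x]` of a random variable, as a real number. -/
def tailP (P : Measure Ω) (Z : Ω → ℝ) (x : ℝ) : ℝ := (P {ω | x < Z ω}).toReal

/-- `X` and `Y` are asymptotically independent:
`P[X > x, Y > x] / P[X > x] → 0` and `P[X > x, Y > x] / P[Y > x] → 0` as `x → ∞`. -/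
def AsympIndep (P : Measure Ω) (X Y : Ω → ℝ) : Prop :=
  Tendsto (fun x : ℝ =>
      (P {ω | x < X ω ∧ x < Y ω}).toReal / (P {ω | x < X ω}).toReal) atTop (nhds 0) ∧
    Tendsto (fun x : ℝ =>
      (P {ω | x < X ω ∧ x < Y ω}).toReal / (P {ω | x < Y ω}).toReal) atTop (nhds 0)

/-!
A sum `∑ Θ_t X_t` exceeds a high level essentially only when one single term does, so under the
moment conditions its tail `G` satisfies `∑ P[Θ_t X_t > x] ~ G x`. In the logarithmic variable the
left-hand side is a convolution: with `F` the tail of the `X_t` and `ρ` the measure whose Fourier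
transform is `β ↦ ∑ E[Θ_t ^ (α + iβ)]`, the functions `s ↦ e^{αs} F(x e^s) / G x` convolved with
`ρ` tend to `1` as `x → ∞`. Potter's bounds and Helly's selection principle give subsequential
limits of these functions. Every limit is a bounded solution `K` of `K * ρ = 1`. Since `ρ` has
exponential moments, its Fourier transform is smooth, and as it has no zero one may divide by it on
compactly supported test functions, which forces `K = 1 / ρ(ℝ)`. Hence `F / G → 1 / ρ(ℝ)`.
-/

section FourierCancellation

open FourierTransform
open scoped ContDiff

section Space

variable {V : Type*} [NormedAddCommGroup V] [InnerProductSpace ℝ V] [FiniteDimensional ℝ V]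
  [MeasurableSpace V] [BorelSpace V] {ρ : Measure V} [IsFiniteMeasure ρ]

theorem integral_fourierInv_add {q : V → ℂ} (hq : Integrable q) (y : V) :
    ∫ v, (𝓕⁻ q) (y + v) ∂ρ = (𝓕⁻ fun ξ => charFun ρ ((2 * Real.pi) • ξ) * q ξ) y := by
  have hprod : Integrable (Function.uncurry fun v w : V =>
      Complex.exp (↑(2 * Real.pi * inner ℝ w (y + v)) * Complex.I) • q w) (ρ.prod volume) := by
    have hbound : Integrable (fun z : V × V => (1 : ℂ) * q z.2) (ρ.prod volume) :=
      (integrable_const (1 : ℂ)).mul_prod hq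
    refine hbound.mono ?_ (ae_of_all _ fun z => ?_)
    · have hexp : Continuous fun z : V × V =>
          Complex.exp (↑(2 * Real.pi * inner ℝ z.2 (y + z.1)) * Complex.I) := by fun_prop
      exact hexp.aestronglyMeasurable.smul hq.aestronglyMeasurable.comp_snd
    · simp only [Function.uncurry_def, smul_eq_mul, norm_mul, Complex.norm_exp_ofReal_mul_I,
        norm_one, le_refl]
  simp_rw [Real.fourierInv_eq']
  rw [integral_integral_swap hprod]
  congr 1 with w
  have hsplit : ∀ v : V, Complex.exp (↑(2 * Real.pi * inner ℝ w (y + v)) * Complex.I) • q w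
      = Complex.exp (inner ℝ v ((2 * Real.pi) • w) * Complex.I) *
        (Complex.exp (↑(2 * Real.pi * inner ℝ w y) * Complex.I) * q w) := by
    intro v
    rw [← mul_assoc, ← Complex.exp_add, inner_add_right, inner_smul_right, real_inner_comm w v,
      smul_eq_mul]
    congr 2
    push_cast
    ring
  simp_rw [hsplit, integral_mul_const, ← charFun_apply, smul_eq_mul, mul_left_comm]

theorem integral_mul_integral_add_eq {K h : V → ℂ} (hK : Measurable K) {B : ℝ}
    (hB : ∀ s, ‖K s‖ ≤ B) (hh : Integrable h) :
    ∫ y, K y * ∫ v, h (y + v) ∂ρ = ∫ s, (∫ v, K (s - v) ∂ρ) * h s := by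
  have hint : Integrable (fun z : V × V => K (z.1 - z.2) * h z.1) (volume.prod ρ) := by
    have hbound : Integrable (fun z : V × V => h z.1 * (1 : ℂ)) (volume.prod ρ) :=
      hh.mul_prod (integrable_const (1 : ℂ))
    simp only [mul_one] at hbound
    exact hbound.bdd_mul (hK.comp (measurable_fst.sub measurable_snd)).aestronglyMeasurable
      (ae_of_all _ fun z => hB _)
  have hshift : Integrable (Function.uncurry fun y v : V => K y * h (y + v)) (volume.prod ρ) := by
    have hmp : MeasurePreserving (fun z : V × V => (z.1 + z.2, z.2)) (volume.prod ρ)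
        (volume.prod ρ) := measurePreserving_add_prod volume ρ
    simpa [Function.uncurry_def, Function.comp_def] using hmp.integrable_comp_of_integrable hint
  calc ∫ y, K y * ∫ v, h (y + v) ∂ρ = ∫ v, (∫ y, K y * h (y + v)) ∂ρ := by
        simp_rw [← integral_const_mul]
        exact integral_integral_swap hshift
    _ = ∫ v, (∫ s, K (s - v) * h s) ∂ρ := by
        congr 1 with v
        rw [← integral_sub_right_eq_self _ v]
        simp only [sub_add_cancel]
    _ = ∫ s, (∫ v, K (s - v) ∂ρ) * h s := by
        simp_rw [← integral_mul_const]
        exact (integral_integral_swap hint).symm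

end Space

variable {ρ : Measure ℝ} [IsFiniteMeasure ρ]

theorem exists_schwartz_fourierInv_eq_integral (hmom : ∀ k : ℕ, MemLp id (k : ℝ≥0∞) ρ)
    (hne : ∀ t, charFun ρ t ≠ 0) {ψ : ℝ → ℂ} (hψ : ContDiff ℝ ∞ ψ) (hψc : HasCompactSupport ψ) :
    ∃ h : SchwartzMap ℝ ℂ, ∀ y, (𝓕⁻ ψ) y = ∫ v, h (y + v) ∂ρ := by
  set R : ℝ → ℂ := fun ξ => charFun ρ ((2 * Real.pi) • ξ)
  have hRsmooth : ContDiff ℝ ∞ R :=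
    (contDiff_charFun' (n := ⊤) hmom).comp (contDiff_const_smul _)
  have hsupp : HasCompactSupport fun ξ => ψ ξ * (R ξ)⁻¹ := hψc.mul_right
  let q : SchwartzMap ℝ ℂ := hsupp.toSchwartzMap (hψ.mul (hRsmooth.inv fun _ => hne _))
  refine ⟨𝓕⁻ q, fun y => ?_⟩
  have hψq : (fun ξ => R ξ * q ξ) = ψ := funext fun ξ => by
    change R ξ * (ψ ξ * (R ξ)⁻¹) = ψ ξ
    rw [mul_left_comm, mul_inv_cancel₀ (hne _), mul_one]
  rw [SchwartzMap.fourierInv_coe, integral_fourierInv_add q.integrable, hψq]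

theorem integral_mul_fourierInv_eq_zero (hmom : ∀ k : ℕ, MemLp id (k : ℝ≥0∞) ρ)
    (hne : ∀ t, charFun ρ t ≠ 0) {ψ : ℝ → ℂ} (hψ : ContDiff ℝ ∞ ψ) (hψc : HasCompactSupport ψ)
    {K : ℝ → ℂ} (hK : Measurable K) {B : ℝ} (hB : ∀ s, ‖K s‖ ≤ B)
    (hconv : ∀ᵐ s, ∫ v, K (s - v) ∂ρ = 0) :
    ∫ y, K y * (𝓕⁻ ψ) y = 0 := by
  obtain ⟨h, hh⟩ := exists_schwartz_fourierInv_eq_integral hmom hne hψ hψc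
  simp_rw [hh]
  rw [integral_mul_integral_add_eq hK hB h.integrable]
  refine integral_eq_zero_of_ae ?_
  filter_upwards [hconv] with s hs
  rw [hs, zero_mul, Pi.zero_apply]

theorem exists_hasCompactSupport_integral_fourierInv_eq_one :
    ∃ ψ : ℝ → ℂ, ContDiff ℝ ∞ ψ ∧ HasCompactSupport ψ ∧ Integrable (𝓕⁻ ψ) ∧
      ∫ y, (𝓕⁻ ψ) y = 1 := by
  let b : ContDiffBump (0 : ℝ) := ⟨1, 2, one_pos, one_lt_two⟩
  have hψ : ContDiff ℝ ∞ fun ξ => (b ξ : ℂ) := Complex.ofRealCLM.contDiff.comp b.contDiff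
  have hψc : HasCompactSupport fun ξ => (b ξ : ℂ) :=
    b.hasCompactSupport.comp_left (g := fun r : ℝ => (r : ℂ)) Complex.ofReal_zero
  let Ψ : SchwartzMap ℝ ℂ := hψc.toSchwartzMap hψ
  have hinv : ⇑(𝓕⁻ Ψ : SchwartzMap ℝ ℂ) = 𝓕⁻ fun ξ => (b ξ : ℂ) := SchwartzMap.fourierInv_coe Ψ
  refine ⟨_, hψ, hψc, hinv ▸ (𝓕⁻ Ψ : SchwartzMap ℝ ℂ).integrable, ?_⟩
  have hzero : 𝓕 (𝓕⁻ Ψ : SchwartzMap ℝ ℂ) 0 = (b 0 : ℂ) := by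
    rw [FourierTransform.fourier_fourierInv_eq]
    rfl
  rw [SchwartzMap.fourier_coe, Real.fourier_eq', hinv,
    b.one_of_mem_closedBall (by simp [b])] at hzero
  simpa using hzero

theorem tendsto_integral_dilation_mul {K g : ℝ → ℂ} (hK : Measurable K) {B : ℝ}
    (hB : ∀ s, ‖K s‖ ≤ B) (hg : Integrable g) {x : ℝ} (hx : ContinuousAt K x) :
    Tendsto (fun c : ℝ => ∫ z, K (x + z / c) * g z) atTop (𝓝 (K x * ∫ z, g z)) := by
  rw [← integral_const_mul]
  refine tendsto_integral_filter_of_dominated_convergence (fun z => B * ‖g z‖)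
    (.of_forall fun c => ?_) (.of_forall fun c => ae_of_all _ fun z => ?_)
    (hg.norm.const_mul B) (ae_of_all _ fun z => ?_)
  · exact (hK.comp (by fun_prop)).aestronglyMeasurable.mul hg.aestronglyMeasurable
  · rw [norm_mul]
    gcongr
    exact hB _
  · refine (hx.tendsto.comp ?_).mul_const _
    simpa using (tendsto_const_nhds.div_atTop tendsto_id).const_add x

theorem ae_integral_comp_dilation_eq {E : Type*} [NormedAddCommGroup E] [NormedSpace ℝ E]
    {μ : Measure ℝ} {K : ℝ → E} (hK : StronglyMeasurable K) {a : E}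
    (hconv : ∀ᵐ s, ∫ v, K (s - v) ∂μ = a) (x : ℝ) {c : ℝ} (hc : c ≠ 0) :
    ∀ᵐ s, ∫ v, K (x + (s - v) / c) ∂(μ.map (c * ·)) = a := by
  have hquasi : Measure.QuasiMeasurePreserving (fun s : ℝ => x + s / c) volume volume := by
    refine (measurePreserving_add_left volume x).quasiMeasurePreserving.comp ⟨by fun_prop, ?_⟩
    simp_rw [div_eq_inv_mul]
    rw [Real.map_volume_mul_left (inv_ne_zero hc)]
    exact Measure.smul_absolutelyContinuous
  filter_upwards [hquasi.ae hconv] with s hs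
  rw [integral_map (φ := (c * ·)) (f := fun v => K (x + (s - v) / c)) (by fun_prop)
    (hK.comp_measurable (by fun_prop)).aestronglyMeasurable, ← hs]
  congr 1 with v
  congr 1
  field_simp
  ring

theorem eq_zero_of_integral_sub_eq_zero (hmom : ∀ k : ℕ, MemLp id (k : ℝ≥0∞) ρ)
    (hne : ∀ t, charFun ρ t ≠ 0) {K : ℝ → ℂ} (hK : Measurable K) {B : ℝ} (hB : ∀ s, ‖K s‖ ≤ B)
    (hconv : ∀ᵐ s, ∫ v, K (s - v) ∂ρ = 0) {x : ℝ} (hx : ContinuousAt K x) : K x = 0 := by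
  obtain ⟨ψ, hψ, hψc, hint, hone⟩ := exists_hasCompactSupport_integral_fourierInv_eq_one
  have hvanish : ∀ᶠ c : ℝ in atTop, ∫ z, K (x + z / c) * (𝓕⁻ ψ) z = 0 := by
    filter_upwards [eventually_gt_atTop 0] with c hc
    refine integral_mul_fourierInv_eq_zero (ρ := ρ.map (c * ·)) (fun k => ?_) (fun t => ?_) hψ hψc
      (by fun_prop) (fun _ => hB _) (ae_integral_comp_dilation_eq hK.stronglyMeasurable hconv x
        hc.ne')
    · rw [memLp_map_measure_iff (by fun_prop) (by fun_prop)]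
      exact (hmom k).const_mul c
    · rw [charFun_map_mul]
      exact hne _
  have hlim := tendsto_integral_dilation_mul hK hB hint hx
  rw [hone, mul_one] at hlim
  exact tendsto_nhds_unique (hlim.congr' hvanish) tendsto_const_nhds

theorem eq_div_of_integral_sub_eq (hmom : ∀ k : ℕ, MemLp id (k : ℝ≥0∞) ρ)
    (hne : ∀ t, charFun ρ t ≠ 0) {K : ℝ → ℝ} (hK : Measurable K) {B : ℝ} (hB : ∀ s, |K s| ≤ B)
    {a : ℝ} (hconv : ∀ᵐ s, ∫ v, K (s - v) ∂ρ = a) {x : ℝ} (hx : ContinuousAt K x) :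
    K x = a / ρ.real Set.univ := by
  set m := ρ.real Set.univ
  have hm : m ≠ 0 := by
    have h0 := hne 0
    rw [charFun_zero] at h0
    exact_mod_cast h0
  suffices h : ((K x - a / m : ℝ) : ℂ) = 0 from sub_eq_zero.1 (by exact_mod_cast h)
  refine eq_zero_of_integral_sub_eq_zero hmom hne (K := fun s => ((K s - a / m : ℝ) : ℂ))
    (by fun_prop) (B := B + |a / m|) (fun s => ?_) ?_ (by fun_prop)
  · rw [Complex.norm_real]
    exact (norm_sub_le _ _).trans (add_le_add_left (hB s) _)
  · filter_upwards [hconv] with s hs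
    have hKint : Integrable (fun v => K (s - v)) ρ :=
      .of_bound (Measurable.aestronglyMeasurable (by fun_prop)) B (ae_of_all _ fun v => hB _)
    rw [integral_complex_ofReal, integral_sub hKint (integrable_const _), hs, integral_const,
      smul_eq_mul, mul_div_cancel₀ _ hm, sub_self, Complex.ofReal_zero]

end FourierCancellation

section MonotoneSelection

variable {α β : Type*} [LinearOrder α] [TopologicalSpace α] [OrderTopology α] [DenselyOrdered α]
  [NoMinOrder α]

theorem le_of_antitone_of_dense [LinearOrder β] [TopologicalSpace β] [OrderTopology β]
    {L b : α → β} (hL : Antitone L) (hb : Continuous b) {D : Set α} (hD : Dense D)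
    (hle : ∀ t ∈ D, L t ≤ b t) (s : α) : L s ≤ b s := by
  by_contra! hlt
  obtain ⟨u, hbu, hus⟩ := (((hb.continuousAt.tendsto.eventually (gt_mem_nhds hlt)).filter_mono
    nhdsWithin_le_nhds).and (self_mem_nhdsWithin (s := Set.Iio s))).exists
  obtain ⟨t, ⟨hbt, hts⟩, htD⟩ := hD.inter_open_nonempty _
    ((isOpen_lt hb continuous_const).inter isOpen_Iio) ⟨u, hbu, hus⟩
  exact (hle t htD).not_gt (hbt.trans_le (hL (le_of_lt hts)))

variable [NoMaxOrder α]

theorem tendsto_of_antitone_of_dense [LinearOrder β] [TopologicalSpace β] [OrderTopology β]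
    {ι : Type*} {l : Filter ι} {f : ι → α → β} (hf : ∀ n, Antitone (f n)) {D : Set α}
    (hD : Dense D) {a : D → β} (ha : ∀ t : D, Tendsto (fun n => f n t) l (𝓝 (a t))) {L : α → β}
    (hLa : ∀ (t : D) (s : α), t < s → L s ≤ a t) (haL : ∀ (t : D) (s : α), s < t → a t ≤ L s)
    {x : α} (hx : ContinuousAt L x) : Tendsto (fun n => f n x) l (𝓝 (L x)) := by
  refine tendsto_order.2 ⟨fun c hc => ?_, fun c hc => ?_⟩
  · obtain ⟨s, hcs, hxs⟩ := (((hx.tendsto.eventually (lt_mem_nhds hc)).filter_mono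
      nhdsWithin_le_nhds).and (self_mem_nhdsWithin (s := Set.Ioi x))).exists
    obtain ⟨t, htD, hxt, hts⟩ := hD.exists_between hxs
    filter_upwards [(ha ⟨t, htD⟩).eventually (lt_mem_nhds (hcs.trans_le (hLa _ s hts)))] with n hn
    exact hn.trans_le (hf n hxt.le)
  · obtain ⟨s, hcs, hsx⟩ := (((hx.tendsto.eventually (gt_mem_nhds hc)).filter_mono
      nhdsWithin_le_nhds).and (self_mem_nhdsWithin (s := Set.Iio x))).exists
    obtain ⟨t, htD, hst, htx⟩ := hD.exists_between hsx
    filter_upwards [(ha ⟨t, htD⟩).eventually (gt_mem_nhds ((haL _ s hst).trans_lt hcs))] with n hn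
    exact (hf n htx.le).trans_lt hn

theorem exists_subseq_tendsto_of_forall_bounded {ι : Type*} [Countable ι] {f : ℕ → ι → ℝ}
    (hb : ∀ i, ∃ B, ∀ n, |f n i| ≤ B) :
    ∃ φ : ℕ → ℕ, StrictMono φ ∧ ∃ a : ι → ℝ, ∀ i, Tendsto (fun n => f (φ n) i) atTop (𝓝 (a i)) := by
  choose B hB using hb
  have hcomp : IsCompact (Set.univ.pi fun i => Set.Icc (-B i) (B i)) :=
    isCompact_univ_pi fun i => isCompact_Icc
  obtain ⟨a, -, φ, hφ, ha⟩ := hcomp.tendsto_subseq (x := f) fun n i _ => abs_le.1 (hB i n)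
  exact ⟨φ, hφ, a, tendsto_pi_nhds.1 ha⟩

theorem exists_subseq_tendsto_of_antitone [TopologicalSpace.SeparableSpace α] {f : ℕ → α → ℝ}
    (hf : ∀ n, Antitone (f n)) (hb : ∀ s, ∃ B, ∀ n, |f n s| ≤ B) :
    ∃ φ : ℕ → ℕ, StrictMono φ ∧ ∃ L : α → ℝ, Antitone L ∧ ∀ s, ContinuousAt L s →
      Tendsto (fun n => f (φ n) s) atTop (𝓝 (L s)) := by
  obtain ⟨D, hDc, hD⟩ := TopologicalSpace.exists_countable_dense α
  have : Countable D := hDc.to_subtype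
  obtain ⟨φ, hφ, a, ha⟩ := exists_subseq_tendsto_of_forall_bounded (f := fun n (t : D) => f n t)
    fun t => hb t
  have hanti : Antitone a := fun s t hst =>
    le_of_tendsto_of_tendsto' (ha t) (ha s) fun n => hf _ hst
  have hne : ∀ s : α, Nonempty {t : D // (t : α) < s} := fun s =>
    let ⟨t, htD, hts⟩ := hD.exists_lt s
    ⟨⟨⟨t, htD⟩, hts⟩⟩
  have hbdd : ∀ s : α, BddBelow (Set.range fun t : {t : D // (t : α) < s} => a t) := fun s => by
    obtain ⟨u, huD, hsu⟩ := hD.exists_gt s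
    exact ⟨a ⟨u, huD⟩, Set.forall_mem_range.2 fun t => hanti (t.2.trans hsu).le⟩
  let L : α → ℝ := fun s => ⨅ t : {t : D // (t : α) < s}, a t
  have hLa : ∀ (t : D) (s : α), t < s → L s ≤ a t := fun t s hts => ciInf_le (hbdd s) ⟨t, hts⟩
  have haL : ∀ (t : D) (s : α), s < t → a t ≤ L s := fun t s hst =>
    le_ciInf fun u => hanti (u.2.trans hst).le
  have hL : Antitone L := fun s t hst => le_ciInf fun u => hLa u t (u.2.trans_le hst)
  exact ⟨φ, hφ, L, hL, fun s hs => tendsto_of_antitone_of_dense (fun n => hf _) hD ha hLa haL hs⟩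

end MonotoneSelection

section RegularVariation

theorem apply_two_pow_mul_le {f : ℝ → ℝ} {a x₀ : ℝ} (ha : 0 ≤ a) (hx₀ : 0 ≤ x₀)
    (h : ∀ x ≥ x₀, f (2 * x) ≤ a * f x) (n : ℕ) {x : ℝ} (hx : x₀ ≤ x) :
    f (2 ^ n * x) ≤ a ^ n * f x := by
  induction n with
  | zero => simp
  | succ n ih =>
    have hx' : x₀ ≤ 2 ^ n * x :=
      hx.trans (le_mul_of_one_le_left (hx₀.trans hx) (one_le_pow₀ one_le_two))
    calc f (2 ^ (n + 1) * x) = f (2 * (2 ^ n * x)) := by ring_nf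
      _ ≤ a * (a ^ n * f x) := (h _ hx').trans (by gcongr)
      _ = a ^ (n + 1) * f x := by ring

theorem le_rpow_neg_mul_of_doubling {G : ℝ → ℝ} {c x₀ : ℝ} (hG : Antitone G)
    (hpos : ∀ x > 0, 0 < G x) (hx₀ : 0 < x₀) (hc : 0 ≤ c)
    (h : ∀ x ≥ x₀, G (2 * x) ≤ 2 ^ (-c) * G x) {x y : ℝ} (hx : x₀ ≤ x) (hy : 1 ≤ y) :
    G (y * x) ≤ 2 ^ c * y ^ (-c) * G x := by
  have hx' : 0 < x := hx₀.trans_le hx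
  obtain ⟨n, hny, hyn⟩ := exists_nat_pow_near hy (one_lt_two (α := ℝ))
  have hpow : ((2 : ℝ) ^ (-c)) ^ n ≤ 2 ^ c * y ^ (-c) := by
    calc ((2 : ℝ) ^ (-c)) ^ n = (2 ^ n) ^ (-c) := Real.rpow_pow_comm two_pos.le _ _
      _ ≤ (y / 2) ^ (-c) := by
          refine Real.rpow_le_rpow_of_nonpos (by positivity) ?_ (neg_nonpos.2 hc)
          rw [pow_succ] at hyn
          linarith
      _ = 2 ^ c * y ^ (-c) := by
          rw [Real.div_rpow (by positivity) two_pos.le, Real.rpow_neg two_pos.le, div_inv_eq_mul,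
            mul_comm]
  calc G (y * x) ≤ G (2 ^ n * x) := hG (by gcongr)
    _ ≤ (2 ^ (-c)) ^ n * G x := apply_two_pow_mul_le (by positivity) hx₀.le h n hx
    _ ≤ 2 ^ c * y ^ (-c) * G x := by
        gcongr
        exact (hpos x hx').le

theorem le_rpow_mul_of_le_doubling {G : ℝ → ℝ} {d x₀ : ℝ} (hG : Antitone G)
    (hpos : ∀ x > 0, 0 < G x) (hx₀ : 0 < x₀) (hd : 0 ≤ d)
    (h : ∀ x ≥ x₀, G x ≤ 2 ^ d * G (2 * x)) {x y : ℝ} (hx : x₀ ≤ x) (hy : 1 ≤ y) :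
    G x ≤ 2 ^ d * y ^ d * G (y * x) := by
  have hx' : 0 < x := hx₀.trans_le hx
  obtain ⟨n, hny, hyn⟩ := exists_nat_pow_near hy (one_lt_two (α := ℝ))
  have hinv : ∀ z ≥ x₀, (G (2 * z))⁻¹ ≤ 2 ^ d * (G z)⁻¹ := fun z hz => by
    have hz' : 0 < z := hx₀.trans_le hz
    rw [inv_le_iff_one_le_mul₀ (hpos _ (by positivity)), mul_right_comm, ← div_eq_mul_inv,
      one_le_div (hpos z hz')]
    exact h z hz
  have hiter : G x ≤ (2 ^ d) ^ (n + 1) * G (2 ^ (n + 1) * x) := by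
    have : (G (2 ^ (n + 1) * x))⁻¹ ≤ (2 ^ d) ^ (n + 1) * (G x)⁻¹ :=
      apply_two_pow_mul_le (f := fun z => (G z)⁻¹) (by positivity) hx₀.le hinv (n + 1) hx
    rwa [inv_le_iff_one_le_mul₀ (hpos _ (by positivity)), mul_right_comm, ← div_eq_mul_inv,
      one_le_div (hpos x hx')] at this
  have hpow : ((2 : ℝ) ^ d) ^ (n + 1) ≤ 2 ^ d * y ^ d := by
    rw [pow_succ', Real.rpow_pow_comm two_pos.le]
    gcongr
  have hpos' : 0 ≤ G (y * x) := (hpos _ (by positivity)).le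
  calc G x ≤ (2 ^ d) ^ (n + 1) * G (2 ^ (n + 1) * x) := hiter
    _ ≤ (2 ^ d) ^ (n + 1) * G (y * x) := by
        gcongr
        exact hG (by gcongr)
    _ ≤ 2 ^ d * y ^ d * G (y * x) := by gcongr

-- `x / θ` may lie below the threshold `x₀`, where `G` is compared with its value at `x₀`.
theorem apply_div_le_of_le_doubling {G : ℝ → ℝ} {d x₀ B : ℝ} (hG : Antitone G)
    (hpos : ∀ x > 0, 0 < G x) (hB : ∀ x, G x ≤ B) (hx₀ : 0 < x₀) (hd : 0 ≤ d)
    (h : ∀ x ≥ x₀, G x ≤ 2 ^ d * G (2 * x)) {x θ : ℝ} (hx : x₀ ≤ x) (hθ : 1 ≤ θ) :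
    G (x / θ) ≤ B / G x₀ * (2 ^ d * θ ^ d * G x) := by
  have hx' : 0 < x := hx₀.trans_le hx
  have hθ' : 0 < θ := one_pos.trans_le hθ
  have hGx := hpos x hx'
  have hGx₀ := hpos x₀ hx₀
  have hratio : 1 ≤ B / G x₀ := (one_le_div hGx₀).2 (hB x₀)
  set z := max (x / θ) x₀
  have hxz : z ≤ x := max_le (div_le_self hx'.le hθ) hx
  have hz : 0 < z := hx₀.trans_le (le_max_right _ _)
  have hzG : G (x / θ) ≤ B / G x₀ * G z := by
    rcases le_total x₀ (x / θ) with h | h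
    · rw [show z = x / θ from max_eq_left h]
      exact le_mul_of_one_le_left (hpos _ (by positivity)).le hratio
    · rw [show z = x₀ from max_eq_right h, div_mul_cancel₀ _ hGx₀.ne']
      exact hB _
  have hGz : G z ≤ 2 ^ d * (x / z) ^ d * G (x / z * z) :=
    le_rpow_mul_of_le_doubling hG hpos hx₀ hd h (le_max_right _ _) ((one_le_div hz).2 hxz)
  rw [div_mul_cancel₀ _ hz.ne'] at hGz
  refine hzG.trans ?_
  gcongr
  exact hGz.trans (by gcongr; exact (div_le_comm₀ hz hθ').2 (le_max_left _ _))

/-- The weight `θ ^ (α + δ) + θ ^ (α - δ)`, which dominates `θ ^ r` for `|r - α| ≤ δ`. -/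
def twoSidedPow (α δ θ : ℝ) : ℝ := θ ^ (α + δ) + θ ^ (α - δ)

theorem twoSidedPow_pos {α δ θ : ℝ} (hθ : 0 < θ) : 0 < twoSidedPow α δ θ := by
  unfold twoSidedPow
  positivity

theorem twoSidedPow_mul_le {α δ η θ : ℝ} (hη : 0 < η) (hθ : 0 < θ) :
    twoSidedPow α δ (η * θ) ≤ twoSidedPow α δ η * twoSidedPow α δ θ := by
  have h₁ : 0 ≤ η ^ (α + δ) * θ ^ (α - δ) := by positivity
  have h₂ : 0 ≤ η ^ (α - δ) * θ ^ (α + δ) := by positivity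
  simp only [twoSidedPow, Real.mul_rpow hη.le hθ.le]
  linarith

/-- `F (x / θ)` is bounded by `G x` up to a factor of the order `θ ^ (α ± δ)`, uniformly in `θ > 0`
and `x ≥ x₀`: the form in which Potter's bounds for regularly varying functions are used. -/
def PotterBound (F G : ℝ → ℝ) (α δ C x₀ : ℝ) : Prop :=
  ∀ x ≥ x₀, ∀ θ > 0, F (x / θ) ≤ C * G x * twoSidedPow α δ θ

theorem RegVarying.exists_doubling {G : ℝ → ℝ} {α c d : ℝ} (hG : RegVarying G (-α)) (hc : c < α)
    (hd : α < d) :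
    ∃ x₀ > 0, ∀ x ≥ x₀, G (2 * x) ≤ 2 ^ (-c) * G x ∧ G x ≤ 2 ^ d * G (2 * x) := by
  have hlo : (2 : ℝ) ^ (-d) < 2 ^ (-α) :=
    Real.rpow_lt_rpow_of_exponent_lt one_lt_two (neg_lt_neg hd)
  have hhi : (2 : ℝ) ^ (-α) < 2 ^ (-c) :=
    Real.rpow_lt_rpow_of_exponent_lt one_lt_two (neg_lt_neg hc)
  have hlim := hG.2 2 two_pos
  obtain ⟨x₁, hx₁⟩ := eventually_atTop.1
    ((hlim.eventually (lt_mem_nhds hlo)).and (hlim.eventually (gt_mem_nhds hhi)))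
  refine ⟨max x₁ 1, lt_max_of_lt_right one_pos, fun x hx => ?_⟩
  have hGx := hG.1 x (one_pos.trans_le ((le_max_right _ _).trans hx))
  obtain ⟨hl, hu⟩ := hx₁ x ((le_max_left _ _).trans hx)
  refine ⟨((div_lt_iff₀ hGx).1 hu).le, ?_⟩
  rw [lt_div_iff₀ hGx, Real.rpow_neg two_pos.le, inv_mul_lt_iff₀ (by positivity)] at hl
  exact hl.le

theorem RegVarying.exists_potterBound {G : ℝ → ℝ} {α δ B : ℝ} (hG : RegVarying G (-α))
    (hanti : Antitone G) (hB : ∀ x, G x ≤ B) (hδ : 0 < δ) (hδα : δ < α) :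
    ∃ C > 0, ∃ x₀ > 0, PotterBound G G α δ C x₀ := by
  obtain ⟨x₀, hx₀, hdbl⟩ := hG.exists_doubling (sub_lt_self α hδ) (lt_add_of_pos_right α hδ)
  refine ⟨max (2 ^ (α - δ)) (B / G x₀ * 2 ^ (α + δ)), by positivity, x₀, hx₀, fun x hx θ hθ => ?_⟩
  have hx' : 0 < x := hx₀.trans_le hx
  have hGx := hG.1 x hx'
  rcases le_total θ 1 with hθ1 | hθ1
  · calc G (x / θ) = G (θ⁻¹ * x) := by rw [div_eq_inv_mul]
      _ ≤ 2 ^ (α - δ) * θ⁻¹ ^ (-(α - δ)) * G x :=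
          le_rpow_neg_mul_of_doubling hanti hG.1 hx₀ (sub_nonneg.2 hδα.le)
            (fun x hx => (hdbl x hx).1) hx ((one_le_inv₀ hθ).2 hθ1)
      _ = 2 ^ (α - δ) * G x * θ ^ (α - δ) := by
          rw [Real.inv_rpow hθ.le, ← Real.rpow_neg hθ.le, neg_neg, mul_right_comm]
      _ ≤ _ := by
          gcongr
          · exact le_max_left _ _
          · exact le_add_of_nonneg_left (by positivity)
  · calc G (x / θ) ≤ B / G x₀ * (2 ^ (α + δ) * θ ^ (α + δ) * G x) :=
          apply_div_le_of_le_doubling hanti hG.1 hB hx₀ (by linarith) (fun x hx => (hdbl x hx).2)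
            hx hθ1
      _ = B / G x₀ * 2 ^ (α + δ) * G x * θ ^ (α + δ) := by ring
      _ ≤ _ := by
          gcongr
          · exact le_max_right _ _
          · exact le_add_of_nonneg_right (by positivity)

theorem PotterBound.of_mul_le {F G : ℝ → ℝ} {α δ C x₀ η p : ℝ} (hG : PotterBound G G α δ C x₀)
    (hG0 : ∀ x ≥ x₀, 0 ≤ G x) (hC : 0 ≤ C) (hx₀ : 0 < x₀) (hη : 0 < η) (hp : 0 < p)
    (hF : ∀ z > 0, p * F z ≤ G (η * z)) :
    PotterBound F G α δ (C * twoSidedPow α δ η⁻¹ / p) x₀ := by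
  intro x hx θ hθ
  have hx' : 0 < x := hx₀.trans_le hx
  have hxη : η * (x / θ) = x / (η⁻¹ * θ) := by field_simp
  rw [div_mul_eq_mul_div, div_mul_eq_mul_div, le_div_iff₀' hp]
  calc p * F (x / θ) ≤ G (x / (η⁻¹ * θ)) := hxη ▸ hF _ (by positivity)
    _ ≤ C * G x * twoSidedPow α δ (η⁻¹ * θ) := hG x hx _ (by positivity)
    _ ≤ C * G x * (twoSidedPow α δ η⁻¹ * twoSidedPow α δ θ) :=
        mul_le_mul_of_nonneg_left (twoSidedPow_mul_le (inv_pos.2 hη) hθ)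
          (mul_nonneg hC (hG0 x hx))
    _ = C * twoSidedPow α δ η⁻¹ * G x * twoSidedPow α δ θ := by ring

theorem RegVarying.exists_potterBound_of_mul_le {F G : ℝ → ℝ} {α δ B η p : ℝ}
    (hG : RegVarying G (-α)) (hanti : Antitone G) (hB : ∀ x, G x ≤ B) (hδ : 0 < δ) (hδα : δ < α)
    (hη : 0 < η) (hp : 0 < p) (hF : ∀ z > 0, p * F z ≤ G (η * z)) :
    ∃ C > 0, ∃ x₀ > 0, PotterBound F G α δ C x₀ := by
  obtain ⟨C, hC, x₀, hx₀, hpot⟩ := hG.exists_potterBound hanti hB hδ hδα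
  have := twoSidedPow_pos (α := α) (δ := δ) (inv_pos.2 hη)
  exact ⟨_, by positivity, x₀, hx₀,
    hpot.of_mul_le (fun x hx => (hG.1 x (hx₀.trans_le hx)).le) hC.le hx₀ hη hp hF⟩

theorem RegVarying.of_tendsto_div {F G : ℝ → ℝ} {ρ c : ℝ} (hG : RegVarying G ρ) (hF : Antitone F)
    (hc : 0 < c) (h : Tendsto (fun x => F x / G x) atTop (𝓝 c)) : RegVarying F ρ := by
  have hpos : ∀ x, 0 < F x := fun x => by
    obtain ⟨y, ⟨hy, hy0⟩, hxy⟩ := (((h.eventually (lt_mem_nhds hc)).and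
      (eventually_gt_atTop 0)).and (eventually_ge_atTop x)).exists
    exact ((div_pos_iff_of_pos_right (hG.1 y hy0)).1 hy).trans_le (hF hxy)
  refine ⟨fun x _ => hpos x, fun t ht => ?_⟩
  have hscaled := h.comp (tendsto_id.const_mul_atTop ht : Tendsto (fun x : ℝ => t * x) atTop atTop)
  have hlim := (hscaled.mul (hG.2 t ht)).div h hc.ne'
  rw [mul_div_cancel_left₀ _ hc.ne'] at hlim
  refine hlim.congr' ?_
  filter_upwards [eventually_gt_atTop 0] with x hx
  have := hG.1 x hx
  have := hG.1 (t * x) (by positivity)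
  have := hpos x
  simp only [Function.comp_apply, Pi.div_apply]
  field_simp

end RegularVariation

section SeriesTail

variable {μ : Measure Ω}

theorem tsum_le_rpow_tsum_rpow {ι : Type*} (a : ι → ℝ≥0∞) {r : ℝ} (hr : 1 ≤ r) :
    ∑' i, a i ≤ (∑' i, a i ^ (1 / r)) ^ r := by
  set S := ∑' i, a i ^ (1 / r)
  have hr₀ : 0 < r := one_pos.trans_le hr
  have hterm : ∀ i, a i ≤ a i ^ (1 / r) * S ^ (r - 1) := fun i => by
    calc a i = a i ^ (1 / r) * (a i ^ (1 / r)) ^ (r - 1) := by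
          rw [← ENNReal.rpow_mul, ← ENNReal.rpow_add_of_nonneg _ _ (by positivity)
            (mul_nonneg (by positivity) (by linarith))]
          rw [mul_sub_one, add_sub_cancel, one_div_mul_cancel hr₀.ne', ENNReal.rpow_one]
      _ ≤ a i ^ (1 / r) * S ^ (r - 1) := by
          gcongr
          exact ENNReal.le_tsum i
  calc ∑' i, a i ≤ ∑' i, a i ^ (1 / r) * S ^ (r - 1) := ENNReal.tsum_le_tsum hterm
    _ = S ^ r := by
        rw [ENNReal.tsum_mul_right, show ∑' i, a i ^ (1 / r) = S ^ (1 : ℝ) from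
          (ENNReal.rpow_one S).symm, ← ENNReal.rpow_add_of_nonneg _ _ zero_le_one (by linarith),
          add_sub_cancel]

theorem lintegral_sum_range_rpow_le {f : ℕ → Ω → ℝ≥0∞} (hf : ∀ t, Measurable (f t)) {r : ℝ}
    (hr : 1 ≤ r) (n : ℕ) :
    (∫⁻ ω, (∑ t ∈ Finset.range n, f t ω) ^ r ∂μ) ^ (1 / r)
      ≤ ∑ t ∈ Finset.range n, (∫⁻ ω, f t ω ^ r ∂μ) ^ (1 / r) := by
  have hr₀ : 0 < r := one_pos.trans_le hr
  induction n with
  | zero => simp [ENNReal.zero_rpow_of_pos hr₀, hr₀]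
  | succ n ih =>
    simp_rw [Finset.sum_range_succ]
    exact (ENNReal.lintegral_Lp_add_le (Finset.measurable_sum _ fun t _ => hf t).aemeasurable
      (hf n).aemeasurable hr).trans (by gcongr)

theorem lintegral_tsum_rpow_le {f : ℕ → Ω → ℝ≥0∞} (hf : ∀ t, Measurable (f t)) {r : ℝ}
    (hr : 1 ≤ r) :
    ∫⁻ ω, (∑' t, f t ω) ^ r ∂μ ≤ (∑' t, (∫⁻ ω, f t ω ^ r ∂μ) ^ (1 / r)) ^ r := by
  have hr₀ : 0 < r := one_pos.trans_le hr
  have hsup : ∀ ω, (∑' t, f t ω) ^ r = ⨆ n : ℕ, (∑ t ∈ Finset.range n, f t ω) ^ r := fun ω => by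
    rw [ENNReal.tsum_eq_iSup_nat]
    exact (ENNReal.orderIsoRpow r hr₀).map_iSup _
  simp_rw [hsup]
  rw [lintegral_iSup (fun n => (Finset.measurable_sum _ fun t _ => hf t).pow_const _)
    fun m n hmn ω => by dsimp only; gcongr]
  refine iSup_le fun n => ?_
  rw [← ENNReal.rpow_inv_le_iff hr₀, ← one_div]
  exact (lintegral_sum_range_rpow_le hf hr n).trans (ENNReal.sum_le_tsum _)

theorem setLIntegral_Ioc_zero_one_rpow_sub_one {p : ℝ} (hp : 0 < p) :
    ∫⁻ u in Set.Ioc (0 : ℝ) 1, ENNReal.ofReal (u ^ (p - 1)) = ENNReal.ofReal (1 / p) := by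
  rw [← ofReal_integral_eq_lintegral_ofReal]
  · rw [← intervalIntegral.integral_of_le zero_le_one, integral_rpow (Or.inl (by linarith)),
      sub_add_cancel, Real.one_rpow, Real.zero_rpow hp.ne', sub_zero]
  · exact (intervalIntegrable_iff_integrableOn_Ioc_of_le zero_le_one).1
      (intervalIntegral.intervalIntegrable_rpow' (by linarith))
  · filter_upwards [ae_restrict_mem measurableSet_Ioc] with u hu
    exact Real.rpow_nonneg hu.1.le _

theorem lintegral_rpow_le_of_tail_le {f : Ω → ℝ} (hf : AEMeasurable f μ) (hf₀ : 0 ≤ᵐ[μ] f)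
    (hf₁ : ∀ ω, f ω ≤ 1) {r κ : ℝ} (hr : 0 < r) (hκ : κ < r) {b : ℝ≥0∞}
    (htail : ∀ u ∈ Set.Ioc (0 : ℝ) 1, μ {ω | u < f ω} ≤ b * ENNReal.ofReal (u ^ (-κ))) :
    ∫⁻ ω, ENNReal.ofReal (f ω ^ r) ∂μ ≤ ENNReal.ofReal (r / (r - κ)) * b := by
  have hbound : ∀ u ∈ Set.Ioi (0 : ℝ), μ {ω | u < f ω} * ENNReal.ofReal (u ^ (r - 1))
      ≤ (Set.Ioc (0 : ℝ) 1).indicator (fun u => b * ENNReal.ofReal (u ^ (r - κ - 1))) u := by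
    intro u hu
    by_cases hu₁ : u ≤ 1
    · have hu' : u ∈ Set.Ioc (0 : ℝ) 1 := ⟨hu, hu₁⟩
      rw [Set.indicator_of_mem hu']
      calc μ {ω | u < f ω} * ENNReal.ofReal (u ^ (r - 1))
          ≤ b * ENNReal.ofReal (u ^ (-κ)) * ENNReal.ofReal (u ^ (r - 1)) := by
            gcongr
            exact htail u hu'
        _ = b * ENNReal.ofReal (u ^ (r - κ - 1)) := by
            rw [mul_assoc, ← ENNReal.ofReal_mul (Real.rpow_nonneg hu'.1.le _), ← Real.rpow_add hu]
            ring_nf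
    · have hempty : {ω | u < f ω} = ∅ :=
        Set.eq_empty_of_forall_notMem fun ω hω => hu₁ ((le_of_lt hω).trans (hf₁ ω))
      simp only [hempty, measure_empty, zero_mul, zero_le]
  calc ∫⁻ ω, ENNReal.ofReal (f ω ^ r) ∂μ
      = ENNReal.ofReal r * ∫⁻ u in Set.Ioi (0 : ℝ),
          μ {ω | u < f ω} * ENNReal.ofReal (u ^ (r - 1)) :=
        lintegral_rpow_eq_lintegral_meas_lt_mul μ hf₀ hf hr
    _ ≤ ENNReal.ofReal r * ∫⁻ u, (Set.Ioc (0 : ℝ) 1).indicator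
          (fun u => b * ENNReal.ofReal (u ^ (r - κ - 1))) u := by
        exact mul_le_mul_right ((setLIntegral_mono' measurableSet_Ioi hbound).trans
          (setLIntegral_le_lintegral _ _)) _
    _ = ENNReal.ofReal r * (b * ENNReal.ofReal (1 / (r - κ))) := by
        rw [lintegral_indicator measurableSet_Ioc, lintegral_const_mul _ (by fun_prop),
          setLIntegral_Ioc_zero_one_rpow_sub_one (sub_pos.2 hκ)]
    _ = ENNReal.ofReal (r / (r - κ)) * b := by
        rw [mul_left_comm, ← ENNReal.ofReal_mul hr.le, mul_one_div, mul_comm]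

theorem lintegral_tsum_indicator_rpow_le {Z : ℕ → Ω → ℝ} (hZ : ∀ t, Measurable (Z t))
    (hZ₀ : ∀ t, 0 ≤ᵐ[μ] Z t) {r κ : ℝ} (hr : 1 ≤ r) (hκ : κ < r) {b : ℕ → ℝ≥0∞}
    (htail : ∀ t, ∀ u ∈ Set.Ioc (0 : ℝ) 1, μ {ω | u < Z t ω} ≤ b t * ENNReal.ofReal (u ^ (-κ))) :
    ∫⁻ ω, (∑' t, ENNReal.ofReal (if Z t ω ≤ 1 then Z t ω else 0)) ^ r ∂μ
      ≤ ENNReal.ofReal (r / (r - κ)) * (∑' t, b t ^ (1 / r)) ^ r := by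
  have hr₀ : 0 < r := one_pos.trans_le hr
  let W : ℕ → Ω → ℝ := fun t ω => if Z t ω ≤ 1 then Z t ω else 0
  have hW : ∀ t, Measurable (W t) := fun t =>
    .ite (measurableSet_le (hZ t) measurable_const) (hZ t) measurable_const
  have hW₀ : ∀ t, 0 ≤ᵐ[μ] W t := fun t => by
    filter_upwards [hZ₀ t] with ω hω using ite_nonneg hω le_rfl
  have hW₁ : ∀ t ω, W t ω ≤ 1 := fun t ω => by
    dsimp only [W]
    split_ifs with h
    exacts [h, zero_le_one]
  have hWZ : ∀ t, ∀ u > 0, {ω | u < W t ω} ⊆ {ω | u < Z t ω} := fun t u hu ω hω => by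
    simp only [W, Set.mem_ofPred_eq] at hω ⊢
    split_ifs at hω with h
    exacts [hω, absurd hω hu.not_gt]
  have hmoment : ∀ t, ∫⁻ ω, ENNReal.ofReal (W t ω) ^ r ∂μ ≤ ENNReal.ofReal (r / (r - κ)) * b t :=
    fun t => by
      refine (lintegral_congr_ae ?_).trans_le (lintegral_rpow_le_of_tail_le (hW t).aemeasurable
        (hW₀ t) (hW₁ t) hr₀ hκ fun u hu => (measure_mono (hWZ t u hu.1)).trans (htail t u hu))
      filter_upwards [hW₀ t] with ω hω using ENNReal.ofReal_rpow_of_nonneg hω hr₀.le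
  calc _ ≤ (∑' t, (∫⁻ ω, ENNReal.ofReal (W t ω) ^ r ∂μ) ^ (1 / r)) ^ r :=
        lintegral_tsum_rpow_le (fun t => (hW t).ennreal_ofReal) hr
    _ ≤ (∑' t, (ENNReal.ofReal (r / (r - κ)) * b t) ^ (1 / r)) ^ r := by
        gcongr with t
        exact hmoment t
    _ = ENNReal.ofReal (r / (r - κ)) * (∑' t, b t ^ (1 / r)) ^ r := by
        simp_rw [ENNReal.mul_rpow_of_nonneg _ _ (one_div_nonneg.2 hr₀.le)]
        rw [ENNReal.tsum_mul_left, ENNReal.mul_rpow_of_nonneg _ _ hr₀.le, ← ENNReal.rpow_mul,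
          one_div_mul_cancel hr₀.ne', ENNReal.rpow_one]

theorem measure_one_lt_tsum_le {Z : ℕ → Ω → ℝ} (hZ : ∀ t, Measurable (Z t))
    (hZ₀ : ∀ t, 0 ≤ᵐ[μ] Z t) {r κ : ℝ} (hr : 1 ≤ r) (hκ : κ < r) {b : ℕ → ℝ≥0∞}
    (htail : ∀ t, ∀ u ∈ Set.Ioc (0 : ℝ) 1, μ {ω | u < Z t ω} ≤ b t * ENNReal.ofReal (u ^ (-κ))) :
    μ {ω | 1 < ∑' t, ENNReal.ofReal (Z t ω)}
      ≤ (1 + ENNReal.ofReal (r / (r - κ))) * (∑' t, b t ^ (1 / r)) ^ r := by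
  have hr₀ : 0 < r := one_pos.trans_le hr
  set W : ℕ → Ω → ℝ≥0∞ := fun t ω => ENNReal.ofReal (if Z t ω ≤ 1 then Z t ω else 0)
  have hW : ∀ t, Measurable (W t) := fun t =>
    (Measurable.ite (measurableSet_le (hZ t) measurable_const) (hZ t)
      measurable_const).ennreal_ofReal
  have hcover : {ω | 1 < ∑' t, ENNReal.ofReal (Z t ω)}
      ⊆ (⋃ t, {ω | 1 < Z t ω}) ∪ {ω | 1 ≤ (∑' t, W t ω) ^ r} := by
    intro ω hω
    by_cases hlarge : ∃ t, 1 < Z t ω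
    · exact Or.inl (Set.mem_iUnion.2 hlarge)
    · push Not at hlarge
      have hWZ : ∀ t, W t ω = ENNReal.ofReal (Z t ω) := fun t =>
        congrArg ENNReal.ofReal (if_pos (hlarge t))
      refine Or.inr (ENNReal.one_le_rpow ?_ hr₀)
      simp_rw [hWZ]
      exact le_of_lt hω
  calc _ ≤ μ (⋃ t, {ω | 1 < Z t ω}) + μ {ω | 1 ≤ (∑' t, W t ω) ^ r} :=
        (measure_mono hcover).trans (measure_union_le _ _)
    _ ≤ ∑' t, b t + ∫⁻ ω, (∑' t, W t ω) ^ r ∂μ := by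
        gcongr
        · refine (measure_iUnion_le _).trans (ENNReal.tsum_le_tsum fun t => ?_)
          simpa using htail t 1 ⟨one_pos, le_rfl⟩
        · simpa using mul_meas_ge_le_lintegral (μ := μ) ((Measurable.tsum hW).pow_const r) 1
    _ ≤ (∑' t, b t ^ (1 / r)) ^ r + ENNReal.ofReal (r / (r - κ)) * (∑' t, b t ^ (1 / r)) ^ r :=
        add_le_add (tsum_le_rpow_tsum_rpow b hr)
          (lintegral_tsum_indicator_rpow_le hZ hZ₀ hr hκ htail)
    _ = _ := by rw [add_mul, one_mul]

theorem measure_lt_tsum_le {Z : ℕ → Ω → ℝ} (hZ : ∀ t, Measurable (Z t)) (hZ₀ : ∀ t, 0 ≤ᵐ[μ] Z t)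
    {x r κ : ℝ} (hx : 0 < x) (hr : 1 ≤ r) (hκ : κ < r) {b : ℕ → ℝ≥0∞}
    (htail : ∀ t, ∀ u ∈ Set.Ioc (0 : ℝ) 1,
      μ {ω | u * x < Z t ω} ≤ b t * ENNReal.ofReal (u ^ (-κ))) :
    μ {ω | ENNReal.ofReal x < ∑' t, ENNReal.ofReal (Z t ω)}
      ≤ (1 + ENNReal.ofReal (r / (r - κ))) * (∑' t, b t ^ (1 / r)) ^ r := by
  have hscale : ∀ ω, ∑' t, ENNReal.ofReal (Z t ω)
      = ENNReal.ofReal x * ∑' t, ENNReal.ofReal (Z t ω / x) := fun ω => by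
    simp_rw [← ENNReal.tsum_mul_left, ← ENNReal.ofReal_mul hx.le, mul_div_cancel₀ _ hx.ne']
  refine (measure_mono fun ω (hω : ENNReal.ofReal x < _) => ?_).trans
    (measure_one_lt_tsum_le (Z := fun t ω => Z t ω / x) (fun t => (hZ t).div_const x)
      (fun t => (hZ₀ t).mono fun ω hω => div_nonneg hω hx.le) hr hκ fun t u hu => ?_)
  · rw [hscale ω] at hω
    refine lt_of_mul_lt_mul_left' (a := ENNReal.ofReal x) ?_
    rwa [mul_one]
  · simpa only [lt_div_iff₀ hx] using htail t u hu

end SeriesTail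

section SingleLargeJump

variable {μ : Measure Ω}

/-- The tail `P[∑ Z_t > x]` of the sum of a sequence of nonnegative random variables. The sum is
taken in `[0, ∞]`, so no convergence is presupposed. -/
def seriesTail (μ : Measure Ω) (Z : ℕ → Ω → ℝ) (x : ℝ) : ℝ :=
  (μ {ω | ENNReal.ofReal x < ∑' t, ENNReal.ofReal (Z t ω)}).toReal

/-- The tails of the sequence `Z` are dominated by `G`, uniformly down to small multiples of the
level: `P[Z_t > u x] ≤ M_t G(x) u^{-κ}` for `x ≥ x₀` and `0 < u ≤ 1`. -/
def TailDominated (μ : Measure Ω) (Z : ℕ → Ω → ℝ) (G : ℝ → ℝ) (κ x₀ : ℝ) (M : ℕ → ℝ≥0∞) : Prop :=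
  ∀ t, ∀ x ≥ x₀, ∀ u ∈ Set.Ioc (0 : ℝ) 1,
    μ {ω | u * x < Z t ω} ≤ M t * ENNReal.ofReal (G x * u ^ (-κ))

theorem sum_measureReal_le_measureReal_biUnion_add [IsFiniteMeasure μ] {E : ℕ → Set Ω}
    (hE : ∀ t, MeasurableSet (E t)) (m : ℕ) :
    ∑ t ∈ Finset.range m, μ.real (E t) ≤ μ.real (⋃ t ∈ Finset.range m, E t)
      + ∑ t ∈ Finset.range m, ∑ s ∈ Finset.range t, μ.real (E s ∩ E t) := by
  induction m with
  | zero => simp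
  | succ m ih =>
    have hunion : (⋃ t ∈ Finset.range (m + 1), E t) = (⋃ t ∈ Finset.range m, E t) ∪ E m := by
      rw [Finset.range_add_one, Finset.set_biUnion_insert, Set.union_comm]
    have hincl_excl := measureReal_union_add_inter (μ := μ) (s := ⋃ t ∈ Finset.range m, E t) (hE m)
      (measure_ne_top _ _) (measure_ne_top _ _)
    have hinter : μ.real ((⋃ t ∈ Finset.range m, E t) ∩ E m)
        ≤ ∑ s ∈ Finset.range m, μ.real (E s ∩ E m) := by
      rw [Set.iUnion₂_inter]
      exact measureReal_biUnion_finset_le _ _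
    rw [Finset.sum_range_succ, Finset.sum_range_succ, hunion]
    linarith

theorem exists_lt_or_exists_pair_lt {z : ℕ → ℝ} {m : ℕ} {x w : ℝ} (hx : 0 < x) (hw : 0 < w)
    (hw' : w ≤ 1 / 2) (h : (1 - w) * x < ∑ t ∈ Finset.range m, z t) :
    (∃ t ∈ Finset.range m, (1 - 2 * w) * x < z t) ∨
      ∃ t ∈ Finset.range m, ∃ s ∈ Finset.range t,
        w / (m + 1) * x < z s ∧ w / (m + 1) * x < z t := by
  by_contra! ⟨hone, hpair⟩
  set k := w / (m + 1) * x with hk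
  have hk₀ : 0 < k := by positivity
  have hmk : (m + 1) * k = w * x := by rw [hk]; field_simp
  by_cases hlarge : ∃ t ∈ Finset.range m, k < z t
  · obtain ⟨t, ht, hkt⟩ := hlarge
    have hothers : ∀ s ∈ (Finset.range m).erase t, z s ≤ k := by
      intro s hs
      obtain ⟨hst, hsm⟩ := Finset.mem_erase.1 hs
      rcases lt_or_gt_of_ne hst with hlt | hlt
      · by_contra! hks
        exact absurd hkt (hpair t ht s (Finset.mem_range.2 hlt) hks).not_gt
      · exact hpair s hsm t (Finset.mem_range.2 hlt) hkt
    have hsum := Finset.sum_le_card_nsmul _ _ _ hothers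
    have hcard : ((Finset.range m).erase t).card • k ≤ m * k := by
      rw [nsmul_eq_mul]
      gcongr
      exact_mod_cast Finset.card_erase_le.trans (by simp)
    rw [← Finset.add_sum_erase _ _ ht] at h
    linarith [hone t ht]
  · push Not at hlarge
    have hsum := Finset.sum_le_card_nsmul _ _ _ hlarge
    rw [Finset.card_range, nsmul_eq_mul] at hsum
    nlinarith

theorem lt_tsum_add_or_exists_lt_or_exists_pair_lt {z : ℕ → ℝ} (hz : ∀ t, 0 ≤ z t) (m : ℕ)
    {x w : ℝ} (hx : 0 < x) (hw : 0 < w) (hw' : w ≤ 1 / 2)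
    (h : ENNReal.ofReal x < ∑' t, ENNReal.ofReal (z t)) :
    ENNReal.ofReal (w * x) < ∑' t, ENNReal.ofReal (z (t + m)) ∨
      (∃ t ∈ Finset.range m, (1 - 2 * w) * x < z t) ∨
      ∃ t ∈ Finset.range m, ∃ s ∈ Finset.range t,
        w / (m + 1) * x < z s ∧ w / (m + 1) * x < z t := by
  refine or_iff_not_imp_left.2 fun hrest => exists_lt_or_exists_pair_lt hx hw hw' ?_
  by_contra! hhead
  refine h.not_ge ?_
  calc ∑' t, ENNReal.ofReal (z t)
      = ENNReal.ofReal (∑ t ∈ Finset.range m, z t) + ∑' t, ENNReal.ofReal (z (t + m)) := by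
        rw [ENNReal.ofReal_sum_of_nonneg fun t _ => hz t]
        exact (ENNReal.summable.sum_add_tsum_nat_add' (f := fun t => ENNReal.ofReal (z t))).symm
    _ ≤ ENNReal.ofReal ((1 - w) * x) + ENNReal.ofReal (w * x) := by
        gcongr
        exact not_lt.1 hrest
    _ = ENNReal.ofReal x := by
        rw [← ENNReal.ofReal_add (mul_nonneg (by linarith) hx.le) (by positivity)]
        ring_nf

theorem seriesTail_le_add [IsFiniteMeasure μ] {Z : ℕ → Ω → ℝ} (hZ₀ : ∀ t, 0 ≤ᵐ[μ] Z t) (m : ℕ)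
    {x w : ℝ} (hx : 0 < x) (hw : 0 < w) (hw' : w ≤ 1 / 2) :
    seriesTail μ Z x ≤ seriesTail μ (fun t => Z (t + m)) (w * x)
      + (∑ t ∈ Finset.range m, μ.real {ω | (1 - 2 * w) * x < Z t ω}
        + ∑ t ∈ Finset.range m, ∑ s ∈ Finset.range t,
          μ.real {ω | w / (m + 1) * x < Z s ω ∧ w / (m + 1) * x < Z t ω}) := by
  have hcover : ∀ᵐ ω ∂μ, ENNReal.ofReal x < ∑' t, ENNReal.ofReal (Z t ω) →
      ω ∈ {ω | ENNReal.ofReal (w * x) < ∑' t, ENNReal.ofReal (Z (t + m) ω)} ∪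
        ((⋃ t ∈ Finset.range m, {ω | (1 - 2 * w) * x < Z t ω}) ∪
        ⋃ t ∈ Finset.range m, ⋃ s ∈ Finset.range t,
          {ω | w / (m + 1) * x < Z s ω ∧ w / (m + 1) * x < Z t ω}) := by
    filter_upwards [ae_all_iff.2 hZ₀] with ω hω hsum
    rcases lt_tsum_add_or_exists_lt_or_exists_pair_lt hω m hx hw hw' hsum with
      hrest | ⟨t, ht, hone⟩ | ⟨t, ht, s, hs, hpair⟩
    · exact Or.inl hrest
    · exact Or.inr (Or.inl (Set.mem_iUnion₂.2 ⟨t, ht, hone⟩))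
    · exact Or.inr (Or.inr (Set.mem_iUnion₂.2 ⟨t, ht, Set.mem_iUnion₂.2 ⟨s, hs, hpair⟩⟩))
  refine (ENNReal.toReal_mono (measure_ne_top _ _) (measure_mono_ae hcover)).trans ?_
  refine (measureReal_union_le _ _).trans (add_le_add le_rfl ?_)
  refine (measureReal_union_le _ _).trans (add_le_add (measureReal_biUnion_finset_le _ _) ?_)
  refine (measureReal_biUnion_finset_le _ _).trans (Finset.sum_le_sum fun t _ => ?_)
  exact measureReal_biUnion_finset_le _ _

theorem measureReal_biUnion_lt_le_seriesTail [IsFiniteMeasure μ] (Z : ℕ → Ω → ℝ) (s : Finset ℕ)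
    {x : ℝ} (hx : 0 ≤ x) : μ.real (⋃ t ∈ s, {ω | x < Z t ω}) ≤ seriesTail μ Z x := by
  refine measureReal_mono (Set.iUnion₂_subset fun t _ ω (hω : x < Z t ω) => ?_)
  calc ENNReal.ofReal x < ENNReal.ofReal (Z t ω) := (ENNReal.ofReal_lt_ofReal_iff_of_nonneg hx).2 hω
    _ ≤ ∑' t, ENNReal.ofReal (Z t ω) := ENNReal.le_tsum t

variable {Z : ℕ → Ω → ℝ} {G : ℝ → ℝ} {κ x₀ r : ℝ} {M : ℕ → ℝ≥0∞}

theorem TailDominated.measure_lt_le (h : TailDominated μ Z G κ x₀ M) (t : ℕ) {x : ℝ}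
    (hx : x₀ ≤ x) : μ {ω | x < Z t ω} ≤ M t * ENNReal.ofReal (G x) := by
  simpa only [one_mul, Real.one_rpow, mul_one] using h t x hx 1 ⟨one_pos, le_rfl⟩

theorem TailDominated.tsum_measure_le (h : TailDominated μ Z G κ x₀ M) {x : ℝ} (hx : x₀ ≤ x) :
    ∑' t, μ {ω | x < Z t ω} ≤ (∑' t, M t) * ENNReal.ofReal (G x) :=
  (ENNReal.tsum_le_tsum fun t => h.measure_lt_le t hx).trans_eq ENNReal.tsum_mul_right

theorem TailDominated.measure_lt_tsum_le (h : TailDominated μ Z G κ x₀ M)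
    (hZ : ∀ t, Measurable (Z t)) (hZ₀ : ∀ t, 0 ≤ᵐ[μ] Z t) (hG : ∀ x, 0 ≤ G x) (hr : 1 ≤ r)
    (hκ : κ < r) {x : ℝ} (hx₀ : 0 < x) (hx : x₀ ≤ x) :
    μ {ω | ENNReal.ofReal x < ∑' t, ENNReal.ofReal (Z t ω)}
      ≤ (1 + ENNReal.ofReal (r / (r - κ))) * (∑' t, M t ^ (1 / r)) ^ r * ENNReal.ofReal (G x) := by
  have hr₀ : 0 < r := one_pos.trans_le hr
  refine (_root_.measure_lt_tsum_le hZ hZ₀ hx₀ hr hκ (b := fun t => M t * ENNReal.ofReal (G x))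
    fun t u hu => ?_).trans_eq ?_
  · rw [mul_assoc, ← ENNReal.ofReal_mul (hG x)]
    exact h t x hx u hu
  · simp_rw [ENNReal.mul_rpow_of_nonneg _ _ (one_div_pos.2 hr₀).le, ENNReal.tsum_mul_right]
    rw [ENNReal.mul_rpow_of_nonneg _ _ hr₀.le, ← ENNReal.rpow_mul, one_div_mul_cancel hr₀.ne',
      ENNReal.rpow_one, mul_assoc]

theorem TailDominated.summable_measureReal (h : TailDominated μ Z G κ x₀ M)
    (hM : ∑' t, M t ^ (1 / r) ≠ ⊤) (hr : 1 ≤ r) {x : ℝ} (hx : x₀ ≤ x) :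
    Summable fun t => μ.real {ω | x < Z t ω} := by
  refine ENNReal.summable_toReal (ne_top_of_le_ne_top (ENNReal.mul_ne_top ?_ ENNReal.ofReal_ne_top)
    (h.tsum_measure_le hx))
  exact ne_top_of_le_ne_top (ENNReal.rpow_ne_top_of_nonneg (by linarith) hM)
    (tsum_le_rpow_tsum_rpow M hr)

theorem TailDominated.exists_remainder_le [IsFiniteMeasure μ] (h : TailDominated μ Z G κ x₀ M)
    (hZ : ∀ t, Measurable (Z t)) (hZ₀ : ∀ t, 0 ≤ᵐ[μ] Z t) (hG : ∀ x, 0 ≤ G x) (hr : 1 ≤ r)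
    (hκ : κ < r) (hM : ∑' t, M t ^ (1 / r) ≠ ⊤) (hx₀ : 0 < x₀) {ε : ℝ} (hε : 0 < ε) :
    ∃ m, ∀ x ≥ x₀, ∑' t, μ.real {ω | x < Z (t + m) ω} ≤ ε * G x ∧
      seriesTail μ (fun t => Z (t + m)) x ≤ ε * G x := by
  have hr₀ : 0 < r := one_pos.trans_le hr
  set c : ℝ≥0∞ := 1 + ENNReal.ofReal (r / (r - κ))
  have hc : c ≠ ⊤ := by finiteness
  have hlim : Tendsto (fun m => c * (∑' t, M (t + m) ^ (1 / r)) ^ r) atTop (𝓝 0) := by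
    have hrest := ((ENNReal.continuous_rpow_const (y := r)).tendsto _).comp
      (ENNReal.tendsto_sum_nat_add _ hM)
    rw [ENNReal.zero_rpow_of_pos hr₀] at hrest
    simpa using ENNReal.Tendsto.const_mul hrest (Or.inr hc)
  obtain ⟨m, hm⟩ := (hlim.eventually (gt_mem_nhds (ENNReal.ofReal_pos.2 hε))).exists
  have hshift : TailDominated μ (fun t => Z (t + m)) G κ x₀ (fun t => M (t + m)) :=
    fun t => h (t + m)
  refine ⟨m, fun x hx => ?_⟩
  have hle : c * (∑' t, M (t + m) ^ (1 / r)) ^ r * ENNReal.ofReal (G x)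
      ≤ ENNReal.ofReal (ε * G x) := by
    rw [ENNReal.ofReal_mul hε.le]
    gcongr
  constructor
  · simp_rw [Measure.real]
    rw [← ENNReal.tsum_toReal_eq fun t => measure_ne_top _ _]
    refine ENNReal.toReal_le_of_le_ofReal (mul_nonneg hε.le (hG x)) (le_trans ?_ hle)
    refine (hshift.tsum_measure_le hx).trans ?_
    gcongr
    exact (tsum_le_rpow_tsum_rpow _ hr).trans (le_mul_of_one_le_left' le_self_add)
  · refine ENNReal.toReal_le_of_le_ofReal (mul_nonneg hε.le (hG x)) (le_trans ?_ hle)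
    exact hshift.measure_lt_tsum_le (fun t => hZ _) (fun t => hZ₀ _) hG hr hκ (hx₀.trans_le hx) hx

theorem RegVarying.tendsto_sum_pair_div {ρ : ℝ} (hG : RegVarying G ρ)
    (hpair : ∀ s t, s ≠ t →
      Tendsto (fun x => μ.real {ω | x < Z s ω ∧ x < Z t ω} / G x) atTop (𝓝 0))
    (m : ℕ) {k : ℝ} (hk : 0 < k) :
    Tendsto (fun x => (∑ t ∈ Finset.range m, ∑ s ∈ Finset.range t,
      μ.real {ω | k * x < Z s ω ∧ k * x < Z t ω}) / G x) atTop (𝓝 0) := by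
  simp_rw [Finset.sum_div]
  rw [show (0 : ℝ) = ∑ t ∈ Finset.range m, ∑ _s ∈ Finset.range t, (0 : ℝ) by simp]
  refine tendsto_finsetSum _ fun t _ => tendsto_finsetSum _ fun s hs => ?_
  have hscaled := ((hpair s t (Finset.mem_range.1 hs).ne).comp
    (tendsto_id.const_mul_atTop hk)).mul (hG.2 k hk)
  rw [zero_mul] at hscaled
  refine hscaled.congr' ?_
  filter_upwards [eventually_gt_atTop 0] with x hx
  have := hG.1 (k * x) (by positivity)
  simp only [Function.comp_apply, id_eq]
  field_simp

theorem TailDominated.eventually_tsum_measureReal_le [IsFiniteMeasure μ] {ρ : ℝ}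
    (h : TailDominated μ Z (seriesTail μ Z) κ x₀ M) (hZ : ∀ t, Measurable (Z t))
    (hZ₀ : ∀ t, 0 ≤ᵐ[μ] Z t) (hRV : RegVarying (seriesTail μ Z) ρ) (hr : 1 ≤ r) (hκ : κ < r)
    (hM : ∑' t, M t ^ (1 / r) ≠ ⊤) (hx₀ : 0 < x₀)
    (hpair : ∀ s t, s ≠ t →
      Tendsto (fun x => μ.real {ω | x < Z s ω ∧ x < Z t ω} / seriesTail μ Z x) atTop (𝓝 0))
    {η : ℝ} (hη : 0 < η) :
    ∀ᶠ x in atTop, ∑' t, μ.real {ω | x < Z t ω} ≤ (1 + η) * seriesTail μ Z x := by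
  obtain ⟨m, hm⟩ := h.exists_remainder_le hZ hZ₀ (fun x => ENNReal.toReal_nonneg) hr hκ hM hx₀
    (half_pos hη)
  filter_upwards [(hRV.tendsto_sum_pair_div hpair m one_pos).eventually
    (gt_mem_nhds (half_pos hη)), eventually_ge_atTop x₀] with x hpairs hx
  have hx_pos : 0 < x := hx₀.trans_le hx
  simp only [one_mul] at hpairs
  rw [div_lt_iff₀ (hRV.1 x hx_pos)] at hpairs
  have hbonf := sum_measureReal_le_measureReal_biUnion_add (μ := μ)
    (E := fun t => {ω | x < Z t ω}) (fun t => measurableSet_lt measurable_const (hZ t)) m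
  have hunion := measureReal_biUnion_lt_le_seriesTail (μ := μ) Z (Finset.range m) hx_pos.le
  calc ∑' t, μ.real {ω | x < Z t ω}
      = ∑ t ∈ Finset.range m, μ.real {ω | x < Z t ω} + ∑' t, μ.real {ω | x < Z (t + m) ω} :=
        ((h.summable_measureReal hM hr hx).sum_add_tsum_nat_add m).symm
    _ ≤ seriesTail μ Z x + η / 2 * seriesTail μ Z x + η / 2 * seriesTail μ Z x :=
        add_le_add (hbonf.trans (add_le_add hunion hpairs.le)) (hm x hx).1
    _ = (1 + η) * seriesTail μ Z x := by ring

theorem TailDominated.eventually_le_tsum_measureReal [IsFiniteMeasure μ] {ρ : ℝ}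
    (h : TailDominated μ Z (seriesTail μ Z) κ x₀ M) (hZ : ∀ t, Measurable (Z t))
    (hZ₀ : ∀ t, 0 ≤ᵐ[μ] Z t) (hRV : RegVarying (seriesTail μ Z) ρ) (hr : 1 ≤ r) (hκ : κ < r)
    (hM : ∑' t, M t ^ (1 / r) ≠ ⊤) (hx₀ : 0 < x₀)
    (hpair : ∀ s t, s ≠ t →
      Tendsto (fun x => μ.real {ω | x < Z s ω ∧ x < Z t ω} / seriesTail μ Z x) atTop (𝓝 0))
    {w : ℝ} (hw : 0 < w) (hw' : w < 1 / 2) :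
    ∀ᶠ x in atTop,
      (1 - w) * seriesTail μ Z x ≤ ∑' t, μ.real {ω | (1 - 2 * w) * x < Z t ω} := by
  have hw'' : 0 < 1 - 2 * w := by linarith
  set ε : ℝ := w / 2 / (w ^ ρ + 1) with hε_def
  obtain ⟨m, hm⟩ := h.exists_remainder_le hZ hZ₀ (fun x => ENNReal.toReal_nonneg) hr hκ hM hx₀
    (ε := ε) (by positivity)
  filter_upwards [(hRV.tendsto_sum_pair_div hpair m (k := w / (m + 1)) (by positivity)).eventually
    (gt_mem_nhds (half_pos hw)), (hRV.2 w hw).eventually (gt_mem_nhds (lt_add_one _)),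
    (tendsto_id.const_mul_atTop hw).eventually_ge_atTop x₀,
    (tendsto_id.const_mul_atTop hw'').eventually_ge_atTop x₀, eventually_gt_atTop 0]
    with x hpairs hratio hwx hwx' hx
  have hGx := hRV.1 x hx
  rw [div_lt_iff₀ hGx] at hpairs hratio
  have hrest : seriesTail μ (fun t => Z (t + m)) (w * x) ≤ w / 2 * seriesTail μ Z x :=
    calc seriesTail μ (fun t => Z (t + m)) (w * x) ≤ ε * seriesTail μ Z (w * x) := (hm _ hwx).2
      _ ≤ ε * ((w ^ ρ + 1) * seriesTail μ Z x) := by gcongr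
      _ = w / 2 * seriesTail μ Z x := by rw [hε_def]; field_simp
  have hhead : ∑ t ∈ Finset.range m, μ.real {ω | (1 - 2 * w) * x < Z t ω}
      ≤ ∑' t, μ.real {ω | (1 - 2 * w) * x < Z t ω} :=
    (h.summable_measureReal hM hr hwx').sum_le_tsum _ fun t _ => measureReal_nonneg
  linarith [seriesTail_le_add hZ₀ m hx hw hw'.le]

-- The lower bound compares the levels `x` and `(1 - 2w)x`; regular variation absorbs the loss as
-- `w → 0`.
theorem TailDominated.tendsto_tsum_measureReal_div_seriesTail [IsFiniteMeasure μ] {ρ : ℝ}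
    (h : TailDominated μ Z (seriesTail μ Z) κ x₀ M) (hZ : ∀ t, Measurable (Z t))
    (hZ₀ : ∀ t, 0 ≤ᵐ[μ] Z t) (hRV : RegVarying (seriesTail μ Z) ρ) (hr : 1 ≤ r) (hκ : κ < r)
    (hM : ∑' t, M t ^ (1 / r) ≠ ⊤) (hx₀ : 0 < x₀)
    (hpair : ∀ s t, s ≠ t →
      Tendsto (fun x => μ.real {ω | x < Z s ω ∧ x < Z t ω} / seriesTail μ Z x) atTop (𝓝 0)) :
    Tendsto (fun x => (∑' t, μ.real {ω | x < Z t ω}) / seriesTail μ Z x) atTop (𝓝 1) := by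
  refine tendsto_order.2 ⟨fun c hc => ?_, fun c hc => ?_⟩
  · have hcont : ContinuousAt (fun w : ℝ => (1 - w) * (1 - 2 * w)⁻¹ ^ ρ) 0 := by
      refine ContinuousAt.mul (by fun_prop) (.rpow (.inv₀ (by fun_prop) ?_) (by fun_prop) ?_) <;>
        simp
    have hnear : ∀ᶠ w in 𝓝[>] (0 : ℝ), c < (1 - w) * (1 - 2 * w)⁻¹ ^ ρ ∧ w < 1 / 2 :=
      ((hcont.eventually (lt_mem_nhds (by simpa using hc))).and
        (gt_mem_nhds (by norm_num))).filter_mono nhdsWithin_le_nhds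
    obtain ⟨w, ⟨hcw, hw'⟩, hw⟩ := (hnear.and self_mem_nhdsWithin).exists
    have hl : 0 < (1 - 2 * w)⁻¹ := inv_pos.2 (by linarith)
    filter_upwards [(tendsto_id.const_mul_atTop hl).eventually
        (h.eventually_le_tsum_measureReal hZ hZ₀ hRV hr hκ hM hx₀ hpair hw hw'),
      ((hRV.2 _ hl).const_mul (1 - w)).eventually (lt_mem_nhds hcw), eventually_gt_atTop 0]
      with x hlower hratio hx
    rw [id_eq, mul_inv_cancel_left₀ (inv_pos.1 hl).ne'] at hlower
    refine hratio.trans_le ?_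
    rw [← mul_div_assoc]
    gcongr
    exact (hRV.1 x hx).le
  · filter_upwards [h.eventually_tsum_measureReal_le hZ hZ₀ hRV hr hκ hM hx₀ hpair
      (half_pos (sub_pos.2 hc)), eventually_gt_atTop 0] with x hupper hx
    have hGx := hRV.1 x hx
    rw [div_lt_iff₀ hGx]
    refine hupper.trans_lt ?_
    gcongr
    linarith

end SingleLargeJump

section RandomWeights

variable {P : Measure Ω} {α δ : ℝ}

/-- The sum of the moments of `Θ > 0` of orders `α + δ` and `α - δ`, which bounds all the moments
of orders in between. -/
def twoSidedMom (P : Measure Ω) (Θ : Ω → ℝ) (α δ : ℝ) : ℝ≥0∞ :=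
  ∫⁻ ω, ENNReal.ofReal (twoSidedPow α δ (Θ ω)) ∂P

theorem twoSidedMom_eq_momE_add_momE {Θ : Ω → ℝ} (hm : Measurable Θ) (hΘ : ∀ᵐ ω ∂P, 0 < Θ ω) :
    twoSidedMom P Θ α δ = momE P Θ (α + δ) + momE P Θ (α - δ) := by
  rw [momE, momE, ← lintegral_add_left (by fun_prop)]
  refine lintegral_congr_ae ?_
  filter_upwards [hΘ] with ω hω
  exact ENNReal.ofReal_add (by positivity) (by positivity)

theorem rpow_add_le_twoSidedPow {θ b : ℝ} (hθ : 0 < θ) (hb : |b| ≤ δ) :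
    θ ^ (α + b) ≤ twoSidedPow α δ θ := by
  obtain ⟨hδb, hbδ⟩ := abs_le.1 hb
  rcases le_total 1 θ with h | h
  · exact (Real.rpow_le_rpow_of_exponent_le h (by linarith)).trans
      (le_add_of_nonneg_right (by positivity))
  · exact (Real.rpow_le_rpow_of_exponent_ge hθ h (by linarith)).trans
      (le_add_of_nonneg_left (by positivity))

theorem momE_add_le_twoSidedMom {Θ : Ω → ℝ} (hΘ : ∀ᵐ ω ∂P, 0 < Θ ω) {b : ℝ} (hb : |b| ≤ δ) :
    momE P Θ (α + b) ≤ twoSidedMom P Θ α δ :=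
  lintegral_mono_ae <| hΘ.mono fun _ hω => ENNReal.ofReal_le_ofReal (rpow_add_le_twoSidedPow hω hb)

theorem twoSidedMom_le_two_mul {Θ : Ω → ℝ} (hm : Measurable Θ) (hΘ : ∀ᵐ ω ∂P, 0 < Θ ω) {ε : ℝ}
    (hδ : 0 ≤ δ) (hδε : δ ≤ ε) : twoSidedMom P Θ α δ ≤ 2 * twoSidedMom P Θ α ε := by
  rw [twoSidedMom_eq_momE_add_momE hm hΘ, two_mul, sub_eq_add_neg]
  exact add_le_add (momE_add_le_twoSidedMom hΘ (by rwa [abs_of_nonneg hδ]))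
    (momE_add_le_twoSidedMom hΘ (by rwa [abs_neg, abs_of_nonneg hδ]))

-- Both cases of the RW conditions become one: a moment order `α + δ` strictly below the
-- exponent `r ≥ 1` in which the moments are summed.
theorem RWConditions.exists_exponents {Θ : ℕ → Ω → ℝ} (h : RWConditions P Θ α)
    (hm : ∀ t, Measurable (Θ t)) (hΘ : ∀ t, ∀ᵐ ω ∂P, 0 < Θ t ω) :
    ∃ δ r : ℝ, 0 < δ ∧ δ < α ∧ 1 ≤ r ∧ α + δ < r ∧
      ∑' t, twoSidedMom P (Θ t) α δ ^ (1 / r) ≠ ⊤ := by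
  obtain ⟨ε, hε, hεα, h⟩ := h
  simp_rw [← fun t => twoSidedMom_eq_momE_add_momE (α := α) (δ := ε) (hm t) (hΘ t)] at h
  have hreduce : ∀ δ r : ℝ, 0 ≤ δ → δ ≤ ε → 0 ≤ r → ∑' t, twoSidedMom P (Θ t) α ε ^ (1 / r) ≠ ⊤ →
      ∑' t, twoSidedMom P (Θ t) α δ ^ (1 / r) ≠ ⊤ := by
    intro δ r hδ hδε hr hfin
    have hr' : 0 ≤ 1 / r := by positivity
    refine ne_top_of_le_ne_top
      (ENNReal.mul_ne_top (ENNReal.rpow_ne_top_of_nonneg hr' (ENNReal.ofNat_ne_top (n := 2))) hfin)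
      ?_
    rw [← ENNReal.tsum_mul_left]
    refine ENNReal.tsum_le_tsum fun t => ?_
    rw [← ENNReal.mul_rpow_of_nonneg _ _ hr']
    exact ENNReal.rpow_le_rpow (twoSidedMom_le_two_mul (hm t) (hΘ t) hδ hδε) hr'
  rcases h with ⟨hα, h⟩ | ⟨hα, h⟩
  · have hδ : 0 < min ε ((1 - α) / 2) := lt_min hε (by linarith)
    have hδ' : min ε ((1 - α) / 2) < 1 - α := (min_le_right _ _).trans_lt (by linarith)
    refine ⟨min ε ((1 - α) / 2), 1, hδ, (min_le_left _ _).trans_lt hεα, le_rfl, by linarith,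
      hreduce _ _ hδ.le (min_le_left _ _) zero_le_one ?_⟩
    simpa using h
  · exact ⟨ε / 2, α + ε, by linarith, by linarith, by linarith, by linarith,
      hreduce _ _ (by linarith) (by linarith) (by linarith) h⟩

theorem measure_prodMk_mem_eq_lintegral {β γ : Type*} [MeasurableSpace β] [MeasurableSpace γ]
    [IsFiniteMeasure P] {U : Ω → β} {V : Ω → γ} (h : IndepFun U V P) (hU : Measurable U)
    (hV : Measurable V) {A : Set (β × γ)} (hA : MeasurableSet A) :
    P {ω | (U ω, V ω) ∈ A} = ∫⁻ ω, P {ω' | (U ω, V ω') ∈ A} ∂P := by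
  calc P {ω | (U ω, V ω) ∈ A} = P.map (fun ω => (U ω, V ω)) A :=
        (Measure.map_apply (hU.prodMk hV) hA).symm
    _ = ∫⁻ ω, P.map V (Prod.mk (U ω) ⁻¹' A) ∂P := by
        rw [(indepFun_iff_map_prod_eq_prod_map_map hU.aemeasurable hV.aemeasurable).1 h,
          Measure.prod_apply hA, lintegral_map (measurable_measure_prodMk_left hA) hU]
    _ = ∫⁻ ω, P {ω' | (U ω, V ω') ∈ A} ∂P :=
        lintegral_congr fun ω => Measure.map_apply hV (measurable_prodMk_left hA)

theorem tailP_nonneg (X : Ω → ℝ) (x : ℝ) : 0 ≤ tailP P X x := ENNReal.toReal_nonneg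

theorem antitone_tailP [IsFiniteMeasure P] (X : Ω → ℝ) : Antitone (tailP P X) := fun _ _ hxy =>
  measureReal_mono fun _ hω => hxy.trans_lt hω

theorem tailP_eq_of_identDistrib {X Y : Ω → ℝ} (h : IdentDistrib X Y P P) :
    tailP P X = tailP P Y :=
  funext fun _ => congrArg ENNReal.toReal (h.measure_mem_eq measurableSet_Ioi)

theorem measure_lt_mul_eq_lintegral_tailP [IsFiniteMeasure P] {Θ X : Ω → ℝ}
    (h : IndepFun Θ X P) (hΘ : Measurable Θ) (hX : Measurable X) (hpos : ∀ᵐ ω ∂P, 0 < Θ ω)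
    (x : ℝ) : P {ω | x < Θ ω * X ω} = ∫⁻ ω, ENNReal.ofReal (tailP P X (x / Θ ω)) ∂P := by
  refine (measure_prodMk_mem_eq_lintegral h hΘ hX (A := {q : ℝ × ℝ | x < q.1 * q.2})
    (measurableSet_lt measurable_const (by fun_prop))).trans (lintegral_congr_ae ?_)
  filter_upwards [hpos] with ω hω
  rw [tailP, ENNReal.ofReal_toReal (measure_ne_top _ _)]
  simp only [div_lt_iff₀' hω]

theorem twoSidedPow_inv_le {u : ℝ} (hδ : 0 ≤ δ) (hu : u ∈ Set.Ioc (0 : ℝ) 1) :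
    twoSidedPow α δ u⁻¹ ≤ 2 * u ^ (-(α + δ)) := by
  have hexp : u⁻¹ ^ (α - δ) ≤ u⁻¹ ^ (α + δ) :=
    Real.rpow_le_rpow_of_exponent_le ((one_le_inv₀ hu.1).2 hu.2) (by linarith)
  rw [Real.rpow_neg hu.1.le, ← Real.inv_rpow hu.1.le, twoSidedPow]
  linarith

variable {G : ℝ → ℝ} {C x₀ : ℝ}

theorem PotterBound.measure_lt_mul_le [IsFiniteMeasure P] {Θ X : Ω → ℝ}
    (hF : PotterBound (tailP P X) G α δ C x₀) (h : IndepFun Θ X P) (hΘ : Measurable Θ)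
    (hX : Measurable X) (hpos : ∀ᵐ ω ∂P, 0 < Θ ω) (hδ : 0 ≤ δ) (hC : 0 ≤ C) (hG : ∀ x, 0 ≤ G x)
    {x u : ℝ} (hx : x₀ ≤ x) (hu : u ∈ Set.Ioc (0 : ℝ) 1) :
    P {ω | u * x < Θ ω * X ω} ≤
      ENNReal.ofReal (2 * C) * twoSidedMom P Θ α δ * ENNReal.ofReal (G x * u ^ (-(α + δ))) := by
  have hu₀ : 0 < u := hu.1
  have hCG : 0 ≤ C * G x := mul_nonneg hC (hG x)
  have hpoint : ∀ θ > 0, tailP P X (u * x / θ)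
      ≤ 2 * C * (G x * u ^ (-(α + δ))) * twoSidedPow α δ θ := fun θ hθ =>
    calc tailP P X (u * x / θ) = tailP P X (x / (u⁻¹ * θ)) := by congr 1; field_simp
      _ ≤ C * G x * twoSidedPow α δ (u⁻¹ * θ) := hF x hx _ (by positivity)
      _ ≤ C * G x * (2 * u ^ (-(α + δ)) * twoSidedPow α δ θ) :=
          mul_le_mul_of_nonneg_left ((twoSidedPow_mul_le (by positivity) hθ).trans
            (mul_le_mul_of_nonneg_right (twoSidedPow_inv_le hδ hu) (twoSidedPow_pos hθ).le)) hCG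
      _ = 2 * C * (G x * u ^ (-(α + δ))) * twoSidedPow α δ θ := by ring
  have hGu : 0 ≤ G x * u ^ (-(α + δ)) := mul_nonneg (hG x) (by positivity)
  rw [measure_lt_mul_eq_lintegral_tailP h hΘ hX hpos, mul_right_comm,
    ← ENNReal.ofReal_mul (by positivity), twoSidedMom,
    ← lintegral_const_mul' _ _ ENNReal.ofReal_ne_top]
  refine lintegral_mono_ae (hpos.mono fun ω hω => ?_)
  rw [← ENNReal.ofReal_mul (mul_nonneg (by positivity) hGu)]
  exact ENNReal.ofReal_le_ofReal (hpoint _ hω)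

end RandomWeights

section JointTail

variable {P : Measure Ω} {F G : ℝ → ℝ} {α δ C x₀ : ℝ}

theorem twoSidedMom_max_le {Θ₁ Θ₂ : Ω → ℝ} (hΘ₁ : Measurable Θ₁) :
    twoSidedMom P (fun ω => max (Θ₁ ω) (Θ₂ ω)) α δ
      ≤ twoSidedMom P Θ₁ α δ + twoSidedMom P Θ₂ α δ := by
  unfold twoSidedMom
  rw [← lintegral_add_left (by unfold twoSidedPow; fun_prop)]
  refine lintegral_mono fun ω => ?_
  rcases max_choice (Θ₁ ω) (Θ₂ ω) with h | h <;> simp only [h]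
  · exact le_self_add
  · exact le_add_self

theorem measure_lt_mul_and_lt_mul_le_lintegral [IsFiniteMeasure P] {Θ₁ Θ₂ X₁ X₂ : Ω → ℝ}
    (h : IndepFun (fun ω => (Θ₁ ω, Θ₂ ω)) (fun ω => (X₁ ω, X₂ ω)) P)
    (hΘ₁ : Measurable Θ₁) (hΘ₂ : Measurable Θ₂) (hX₁ : Measurable X₁) (hX₂ : Measurable X₂)
    (hpos₁ : ∀ᵐ ω ∂P, 0 < Θ₁ ω) (hpos₂ : ∀ᵐ ω ∂P, 0 < Θ₂ ω) {x : ℝ} (hx : 0 < x) :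
    P {ω | x < Θ₁ ω * X₁ ω ∧ x < Θ₂ ω * X₂ ω} ≤ ∫⁻ ω, ENNReal.ofReal
      (P.real {ω' | x / max (Θ₁ ω) (Θ₂ ω) < X₁ ω' ∧ x / max (Θ₁ ω) (Θ₂ ω) < X₂ ω'}) ∂P := by
  refine (measure_prodMk_mem_eq_lintegral h (hΘ₁.prodMk hΘ₂) (hX₁.prodMk hX₂)
    (A := {q : (ℝ × ℝ) × (ℝ × ℝ) | x < q.1.1 * q.2.1} ∩ {q | x < q.1.2 * q.2.2})
    ((measurableSet_lt measurable_const (by fun_prop)).inter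
      (measurableSet_lt measurable_const (by fun_prop)))).trans_le (lintegral_mono_ae ?_)
  filter_upwards [hpos₁, hpos₂] with ω hω₁ hω₂
  rw [ofReal_measureReal]
  refine measure_mono fun ω' (hω' : x < Θ₁ ω * X₁ ω' ∧ x < Θ₂ ω * X₂ ω') => ?_
  have hmax : 0 < max (Θ₁ ω) (Θ₂ ω) := lt_max_of_lt_left hω₁
  have hX₁ω : 0 < X₁ ω' := (mul_pos_iff_of_pos_left hω₁).1 (hx.trans hω'.1)
  have hX₂ω : 0 < X₂ ω' := (mul_pos_iff_of_pos_left hω₂).1 (hx.trans hω'.2)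
  refine ⟨(div_lt_iff₀' hmax).2 (hω'.1.trans_le ?_), (div_lt_iff₀' hmax).2 (hω'.2.trans_le ?_)⟩
  · gcongr
    exact le_max_left _ _
  · gcongr
    exact le_max_right _ _

theorem PotterBound.tendsto_comp_div_div (hF : PotterBound F G α δ C x₀) {g : ℝ → ℝ}
    (hg₀ : ∀ y, 0 ≤ g y) (hgF : ∀ y, g y ≤ F y) (hG : ∀ x > 0, 0 < G x)
    (hlim : Tendsto (fun y => g y / F y) atTop (𝓝 0)) {θ : ℝ} (hθ : 0 < θ) :
    Tendsto (fun x => g (x / θ) / G x) atTop (𝓝 0) := by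
  have hbound := (hlim.comp (tendsto_id.atTop_div_const hθ)).mul_const (C * twoSidedPow α δ θ)
  rw [zero_mul] at hbound
  refine squeeze_zero' ?_ ?_ hbound
  · filter_upwards [eventually_gt_atTop 0] with x hx using div_nonneg (hg₀ _) (hG x hx).le
  · filter_upwards [eventually_ge_atTop x₀, eventually_gt_atTop 0] with x hx hx_pos
    have hF₀ : 0 ≤ F (x / θ) := (hg₀ _).trans (hgF _)
    rw [div_le_iff₀ (hG x hx_pos)]
    calc g (x / θ) = g (x / θ) / F (x / θ) * F (x / θ) :=
          (div_mul_cancel_of_imp fun h => (h ▸ hgF _).antisymm (hg₀ _)).symm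
      _ ≤ g (x / θ) / F (x / θ) * (C * G x * twoSidedPow α δ θ) :=
          mul_le_mul_of_nonneg_left (hF x hx θ hθ) (div_nonneg (hg₀ _) hF₀)
      _ = g (x / θ) / F (x / θ) * (C * twoSidedPow α δ θ) * G x := by ring

theorem PotterBound.tendsto_lintegral_comp_div_div (hF : PotterBound F G α δ C x₀) {g : ℝ → ℝ}
    (hg : Antitone g) (hg₀ : ∀ y, 0 ≤ g y) (hgF : ∀ y, g y ≤ F y) (hG : ∀ x > 0, 0 < G x)
    (hlim : Tendsto (fun y => g y / F y) atTop (𝓝 0)) (hC : 0 ≤ C) {V : Ω → ℝ}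
    (hV : Measurable V) (hpos : ∀ᵐ ω ∂P, 0 < V ω) (hfin : twoSidedMom P V α δ ≠ ⊤) :
    Tendsto (fun x => ∫⁻ ω, ENNReal.ofReal (g (x / V ω) / G x) ∂P) atTop (𝓝 0) := by
  have hg_meas := hg.measurable
  rw [← lintegral_zero (μ := P)]
  refine tendsto_lintegral_filter_of_dominated_convergence
    (fun ω => ENNReal.ofReal (C * twoSidedPow α δ (V ω)))
    (.of_forall fun x => by fun_prop) ?_ ?_ ?_
  · filter_upwards [eventually_ge_atTop x₀, eventually_gt_atTop 0] with x hx hx_pos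
    filter_upwards [hpos] with ω hω
    refine ENNReal.ofReal_le_ofReal ((div_le_iff₀ (hG x hx_pos)).2 ?_)
    exact (hgF _).trans ((hF x hx _ hω).trans_eq (mul_right_comm _ _ _))
  · simp_rw [ENNReal.ofReal_mul hC]
    rw [lintegral_const_mul' _ _ ENNReal.ofReal_ne_top]
    exact ENNReal.mul_ne_top ENNReal.ofReal_ne_top hfin
  · filter_upwards [hpos] with ω hω
    rw [← ENNReal.ofReal_zero]
    exact ENNReal.tendsto_ofReal (hF.tendsto_comp_div_div hg₀ hgF hG hlim hω)

theorem PotterBound.tendsto_measureReal_lt_mul_and_lt_mul_div [IsFiniteMeasure P]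
    {Θ₁ Θ₂ X₁ X₂ : Ω → ℝ} (hF : PotterBound (tailP P X₁) G α δ C x₀)
    (h : IndepFun (fun ω => (Θ₁ ω, Θ₂ ω)) (fun ω => (X₁ ω, X₂ ω)) P)
    (hΘ₁ : Measurable Θ₁) (hΘ₂ : Measurable Θ₂) (hX₁ : Measurable X₁) (hX₂ : Measurable X₂)
    (hpos₁ : ∀ᵐ ω ∂P, 0 < Θ₁ ω) (hpos₂ : ∀ᵐ ω ∂P, 0 < Θ₂ ω) (hC : 0 ≤ C)
    (hG : ∀ x > 0, 0 < G x) (hasymp : AsympIndep P X₁ X₂)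
    (hfin₁ : twoSidedMom P Θ₁ α δ ≠ ⊤) (hfin₂ : twoSidedMom P Θ₂ α δ ≠ ⊤) :
    Tendsto (fun x => P.real {ω | x < Θ₁ ω * X₁ ω ∧ x < Θ₂ ω * X₂ ω} / G x) atTop (𝓝 0) := by
  let g : ℝ → ℝ := fun y => P.real {ω | y < X₁ ω ∧ y < X₂ ω}
  have hg : Antitone g := fun _ _ hxy =>
    measureReal_mono fun ω hω => ⟨hxy.trans_lt hω.1, hxy.trans_lt hω.2⟩
  have hlim : Tendsto (fun x => ∫⁻ ω, ENNReal.ofReal (g (x / max (Θ₁ ω) (Θ₂ ω)) / G x) ∂P) atTop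
      (𝓝 0) :=
    hF.tendsto_lintegral_comp_div_div hg (fun _ => measureReal_nonneg)
      (fun _ => measureReal_mono fun _ hω => hω.1) hG hasymp.1 hC (hΘ₁.max hΘ₂)
      (hpos₁.mono fun _ hω => lt_max_of_lt_left hω)
      (ne_top_of_le_ne_top (ENNReal.add_ne_top.2 ⟨hfin₁, hfin₂⟩)
        (twoSidedMom_max_le hΘ₁))
  have hle : ∀ᶠ x in atTop, P {ω | x < Θ₁ ω * X₁ ω ∧ x < Θ₂ ω * X₂ ω} / ENNReal.ofReal (G x)
      ≤ ∫⁻ ω, ENNReal.ofReal (g (x / max (Θ₁ ω) (Θ₂ ω)) / G x) ∂P := by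
    filter_upwards [eventually_gt_atTop 0] with x hx
    have hG_inv : (ENNReal.ofReal (G x))⁻¹ ≠ ⊤ := by simpa using hG x hx
    simp_rw [ENNReal.ofReal_div_of_pos (hG x hx), div_eq_mul_inv]
    rw [lintegral_mul_const' _ _ hG_inv]
    gcongr
    exact measure_lt_mul_and_lt_mul_le_lintegral h hΘ₁ hΘ₂ hX₁ hX₂ hpos₁ hpos₂ hx
  have hquot := tendsto_of_tendsto_of_tendsto_of_le_of_le' tendsto_const_nhds hlim
    (.of_forall fun _ => zero_le) hle
  refine ((ENNReal.tendsto_toReal ENNReal.zero_ne_top).comp hquot).congr' ?_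
  filter_upwards [eventually_gt_atTop 0] with x hx
  rw [Function.comp_apply, ENNReal.toReal_div, ENNReal.toReal_ofReal (hG x hx).le, Measure.real]

end JointTail

/-- The ratio `F (x * exp s) / G x` as a function of the logarithmic variable `s`. -/
def logRatio (F G : ℝ → ℝ) (x s : ℝ) : ℝ := F (x * Real.exp s) / G x

section LogRatio

variable {F G : ℝ → ℝ} {x : ℝ}

theorem logRatio_nonneg (hF : ∀ z, 0 ≤ F z) (hx : 0 ≤ G x) (s : ℝ) : 0 ≤ logRatio F G x s :=
  div_nonneg (hF _) hx

theorem measurable_logRatio (hF : Measurable F) : Measurable (logRatio F G x) := by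
  unfold logRatio
  fun_prop

theorem antitone_logRatio (hF : Antitone F) (hx : 0 ≤ x) (hG : 0 ≤ G x) :
    Antitone (logRatio F G x) := fun s t hst =>
  div_le_div_of_nonneg_right (hF (by gcongr)) hG

end LogRatio

/-- The sum over `t` of the laws of `log (Θ t)` under the measures with density `Θ t ^ α` with
respect to `P`. Convolution with it is the multiplicative convolution with the weights `Θ` in
logarithmic coordinates, and its Fourier transform is the Mellin transform
`∑ t, E[Θ t ^ (α + iβ)]`. -/
def mellinMeasure (P : Measure Ω) (Θ : ℕ → Ω → ℝ) (α : ℝ) : Measure ℝ :=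
  Measure.sum fun t => (P.withDensity fun ω => ENNReal.ofReal (Θ t ω ^ α)).map
    fun ω => Real.log (Θ t ω)

section MellinMeasure

variable {P : Measure Ω} {Θ : ℕ → Ω → ℝ} {α : ℝ}

theorem lintegral_mellinMeasure (hm : ∀ t, Measurable (Θ t)) {g : ℝ → ℝ≥0∞} (hg : Measurable g) :
    ∫⁻ v, g v ∂mellinMeasure P Θ α
      = ∑' t, ∫⁻ ω, ENNReal.ofReal (Θ t ω ^ α) * g (Real.log (Θ t ω)) ∂P := by
  rw [mellinMeasure, lintegral_sum_measure]
  refine tsum_congr fun t => ?_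
  have := hm t
  rw [lintegral_map hg (by fun_prop),
    lintegral_withDensity_eq_lintegral_mul _ (by fun_prop) (by fun_prop)]
  rfl

theorem lintegral_exp_mellinMeasure (hm : ∀ t, Measurable (Θ t)) (hΘ : ∀ t, ∀ᵐ ω ∂P, 0 < Θ t ω)
    (b : ℝ) :
    ∫⁻ v, ENNReal.ofReal (Real.exp (b * v)) ∂mellinMeasure P Θ α
      = ∑' t, momE P (Θ t) (α + b) := by
  rw [lintegral_mellinMeasure hm (by fun_prop)]
  refine tsum_congr fun t => lintegral_congr_ae ?_
  filter_upwards [hΘ t] with ω hω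
  rw [← ENNReal.ofReal_mul (by positivity), Real.rpow_add hω, mul_comm b,
    ← Real.rpow_def_of_pos hω]

theorem integrable_exp_mellinMeasure (hm : ∀ t, Measurable (Θ t))
    (hΘ : ∀ t, ∀ᵐ ω ∂P, 0 < Θ t ω) {b : ℝ} (hb : ∑' t, momE P (Θ t) (α + b) ≠ ⊤) :
    Integrable (fun v => Real.exp (b * v)) (mellinMeasure P Θ α) := by
  refine ⟨by fun_prop, ?_⟩
  rw [hasFiniteIntegral_iff_ofReal (ae_of_all _ fun v => (Real.exp_pos _).le),
    lintegral_exp_mellinMeasure hm hΘ]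
  exact hb.lt_top

theorem mellinMeasure_univ (hm : ∀ t, Measurable (Θ t)) (hΘ : ∀ t, ∀ᵐ ω ∂P, 0 < Θ t ω) :
    mellinMeasure P Θ α Set.univ = ∑' t, momE P (Θ t) α := by
  simpa using lintegral_exp_mellinMeasure (α := α) hm hΘ 0

theorem charFun_mellinMeasure (hm : ∀ t, Measurable (Θ t)) (hΘ : ∀ t, ∀ᵐ ω ∂P, 0 < Θ t ω)
    [IsFiniteMeasure (mellinMeasure P Θ α)] (β : ℝ) :
    charFun (mellinMeasure P Θ α) β = ∑' t, ∫ ω, Complex.exp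
      (((α : ℂ) + (β : ℂ) * Complex.I) * (Real.log (Θ t ω) : ℂ)) ∂P := by
  have hint : Integrable (fun v : ℝ => Complex.exp (β * v * Complex.I)) (mellinMeasure P Θ α) := by
    refine .of_bound (by fun_prop) 1 (ae_of_all _ fun v => ?_)
    rw [← Complex.ofReal_mul, Complex.norm_exp_ofReal_mul_I]
  rw [charFun_apply_real, mellinMeasure, ← (hasSum_integral_measure hint).tsum_eq]
  refine tsum_congr fun t => ?_
  have := hm t
  rw [integral_map (by fun_prop) (by fun_prop), integral_withDensity_eq_integral_toReal_smul
    (by fun_prop) (ae_of_all _ fun ω => ENNReal.ofReal_lt_top)]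
  refine integral_congr_ae ?_
  filter_upwards [hΘ t] with ω hω
  rw [ENNReal.toReal_ofReal (by positivity), Real.rpow_def_of_pos hω, Complex.real_smul,
    Complex.ofReal_exp, ← Complex.exp_add]
  congr 1
  push_cast
  ring

theorem rpow_mul_exp_mul_logRatio_sub_log {F G : ℝ → ℝ} {θ : ℝ} (hθ : 0 < θ) (x s : ℝ) :
    θ ^ α * (Real.exp (α * (s - Real.log θ)) * logRatio F G x (s - Real.log θ))
      = Real.exp (α * s) / G x * F (Real.exp s * x / θ) := by
  rw [logRatio, Real.exp_sub, Real.exp_log hθ, mul_sub, Real.exp_sub, mul_comm α (Real.log θ),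
    ← Real.rpow_def_of_pos hθ, ← mul_div_assoc x, mul_comm x]
  field_simp

theorem integral_exp_mul_logRatio_mellinMeasure [IsProbabilityMeasure P] {X : ℕ → Ω → ℝ}
    {F G : ℝ → ℝ} (hm : ∀ t, Measurable (Θ t)) (hX : ∀ t, Measurable (X t))
    (hΘ : ∀ t, ∀ᵐ ω ∂P, 0 < Θ t ω) (hindep : ∀ t, IndepFun (Θ t) (X t) P)
    (hF : ∀ t, tailP P (X t) = F) {x : ℝ} (hx : 0 < G x) (s : ℝ) :
    ∫ v, Real.exp (α * (s - v)) * logRatio F G x (s - v) ∂mellinMeasure P Θ α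
      = Real.exp (α * s) / G x * ∑' t, P.real {ω | Real.exp s * x < Θ t ω * X t ω} := by
  have hF₀ : ∀ z, 0 ≤ F z := fun z => hF 0 ▸ tailP_nonneg (X 0) z
  have hFm : Measurable F := (hF 0 ▸ antitone_tailP (X 0) : Antitone F).measurable
  have hRm : Measurable (logRatio F G x) := measurable_logRatio hFm
  have hq : 0 ≤ Real.exp (α * s) / G x := by positivity
  have hterm : ∀ t, ∫⁻ ω, ENNReal.ofReal (Θ t ω ^ α) * ENNReal.ofReal
      (Real.exp (α * (s - Real.log (Θ t ω))) * logRatio F G x (s - Real.log (Θ t ω))) ∂P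
      = ENNReal.ofReal
        (Real.exp (α * s) / G x * P.real {ω | Real.exp s * x < Θ t ω * X t ω}) := fun t => by
    have := hm t
    rw [ENNReal.ofReal_mul hq, ofReal_measureReal,
      measure_lt_mul_eq_lintegral_tailP (hindep t) (hm t) (hX t) (hΘ t), hF,
      ← lintegral_const_mul _ (by fun_prop)]
    refine lintegral_congr_ae ?_
    filter_upwards [hΘ t] with ω hω
    rw [← ENNReal.ofReal_mul (by positivity), ← ENNReal.ofReal_mul hq,
      rpow_mul_exp_mul_logRatio_sub_log hω]
  rw [integral_eq_lintegral_of_nonneg_ae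
    (ae_of_all _ fun v => mul_nonneg (Real.exp_pos _).le (logRatio_nonneg hF₀ hx.le _))
    (by fun_prop), lintegral_mellinMeasure hm (by fun_prop)]
  simp_rw [hterm]
  rw [ENNReal.tsum_toReal_eq fun t => ENNReal.ofReal_ne_top, ← tsum_mul_left]
  exact tsum_congr fun t => ENNReal.toReal_ofReal (mul_nonneg hq measureReal_nonneg)

end MellinMeasure

section TauberianLimit

variable {ρ : Measure ℝ}

theorem memLp_id_of_integrable_exp {ε : ℝ} (hε : ε ≠ 0)
    (hexp : Integrable (fun v => Real.exp (ε * v)) ρ)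
    (hexp' : Integrable (fun v => Real.exp (-ε * v)) ρ) (k : ℕ) : MemLp id (k : ℝ≥0∞) ρ := by
  rcases Nat.eq_zero_or_pos k with rfl | hk
  · simpa using (measurable_id.aestronglyMeasurable : AEStronglyMeasurable (id : ℝ → ℝ) ρ)
  · rw [← integrable_norm_rpow_iff measurable_id.aestronglyMeasurable (by positivity) (by simp)]
    simpa using integrable_pow_abs_of_integrable_exp_mul (X := id) hε hexp hexp' k

variable [IsFiniteMeasure ρ]

theorem ae_ae_sub_notMem_of_countable {D : Set ℝ} (hD : D.Countable) :
    ∀ᵐ s : ℝ, ∀ᵐ v ∂ρ, s - v ∉ D :=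
  (Measure.ae_ae_comm (μ := ρ) (ν := volume) (p := fun v s => s - v ∉ D)
    ((measurable_snd.sub measurable_fst) hD.measurableSet.compl)).1 <|
    ae_of_all _ fun v => (measurePreserving_sub_right volume v).quasiMeasurePreserving.ae
      (hD.ae_notMem volume)

theorem ae_tendsto_integral_sub {ε C : ℝ} (hexp : Integrable (fun v => Real.exp (ε * v)) ρ)
    (hexp' : Integrable (fun v => Real.exp (-ε * v)) ρ) {K : ℕ → ℝ → ℝ} {k : ℝ → ℝ}
    (hK : ∀ n, Measurable (K n))
    (hdom : ∀ n s, |K n s| ≤ C * (Real.exp (ε * s) + Real.exp (-ε * s))) {D : Set ℝ}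
    (hD : D.Countable) (hlim : ∀ s ∉ D, Tendsto (fun n => K n s) atTop (𝓝 (k s))) :
    ∀ᵐ s : ℝ, Tendsto (fun n => ∫ v, K n (s - v) ∂ρ) atTop (𝓝 (∫ v, k (s - v) ∂ρ)) := by
  filter_upwards [ae_ae_sub_notMem_of_countable (ρ := ρ) hD] with s hs
  have hshift : ∀ c : ℝ, Integrable (fun v => Real.exp (-c * v)) ρ →
      Integrable (fun v => Real.exp (c * (s - v))) ρ := fun c hc => by
    refine (hc.const_mul (Real.exp (c * s))).congr (ae_of_all _ fun v => ?_)
    simp only [← Real.exp_add, neg_mul, ← sub_eq_add_neg, ← mul_sub]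
  refine tendsto_integral_of_dominated_convergence
    (fun v => C * (Real.exp (ε * (s - v)) + Real.exp (-ε * (s - v))))
    (fun n => ((hK n).comp (by fun_prop)).aestronglyMeasurable)
    (.const_mul ((hshift ε hexp').add (hshift (-ε) (by rwa [neg_neg]))) _)
    (fun n => ae_of_all _ fun v => hdom n _) ?_
  filter_upwards [hs] with v hv using hlim _ hv

theorem eq_exp_div_of_integral_sub_eq (hmom : ∀ k : ℕ, MemLp id (k : ℝ≥0∞) ρ)
    (hne : ∀ t, charFun ρ t ≠ 0) {L : ℝ → ℝ} (hL : Measurable L) {α B a : ℝ}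
    (hB : ∀ s, |L s| ≤ B * Real.exp (-(α * s)))
    (hconv : ∀ᵐ s, ∫ v, Real.exp (α * (s - v)) * L (s - v) ∂ρ = a) {s : ℝ}
    (hs : ContinuousAt L s) : L s = a / ρ.real Set.univ * Real.exp (-(α * s)) := by
  have htilt : Real.exp (α * s) * L s = a / ρ.real Set.univ := by
    refine eq_div_of_integral_sub_eq hmom hne (K := fun s => Real.exp (α * s) * L s)
      (B := B) (by fun_prop) (fun s => ?_) hconv (by fun_prop)
    rw [abs_mul, Real.abs_exp, ← le_div_iff₀' (Real.exp_pos _), div_eq_mul_inv, ← Real.exp_neg]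
    exact hB s
  rw [← htilt, mul_right_comm, ← Real.exp_add, add_neg_cancel, Real.exp_zero, one_mul]

theorem dense_setOf_continuousAt {L : ℝ → ℝ} (hL : Antitone L) : Dense {s | ContinuousAt L s} := by
  simpa only [Set.compl_ofPred, not_not] using hL.countable_not_continuousAt.dense_compl ℝ

theorem limit_eq_exp_of_tendsto_integral_sub {α ε C B a : ℝ} (hε : ε ≠ 0)
    (hexp : Integrable (fun v => Real.exp (ε * v)) ρ)
    (hexp' : Integrable (fun v => Real.exp (-ε * v)) ρ) (hne : ∀ t, charFun ρ t ≠ 0)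
    {f : ℕ → ℝ → ℝ} (hf : ∀ n, Measurable (f n)) (hf₀ : ∀ n s, 0 ≤ f n s)
    (hdom : ∀ n s, Real.exp (α * s) * f n s ≤ C * (Real.exp (ε * s) + Real.exp (-ε * s)))
    (hbd : ∀ s, ∀ᶠ n in atTop, f n s ≤ B * Real.exp (-(α * s)))
    (hconv : ∀ s, Tendsto (fun n => ∫ v, Real.exp (α * (s - v)) * f n (s - v) ∂ρ) atTop (𝓝 a))
    {L : ℝ → ℝ} (hL : Antitone L)
    (hlim : ∀ s, ContinuousAt L s → Tendsto (fun n => f n s) atTop (𝓝 (L s))) {s : ℝ}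
    (hs : ContinuousAt L s) : L s = a / ρ.real Set.univ * Real.exp (-(α * s)) := by
  have hdense := dense_setOf_continuousAt hL
  have hL₀ : ∀ s, 0 ≤ L s := fun s => by
    obtain ⟨t, ht, hst, -⟩ := hdense.exists_between (lt_add_one s)
    exact (ge_of_tendsto' (hlim t ht) fun n => hf₀ n t).trans (hL hst.le)
  have hLB : ∀ s, L s ≤ B * Real.exp (-(α * s)) :=
    le_of_antitone_of_dense hL (by fun_prop) hdense fun t ht => le_of_tendsto (hlim t ht) (hbd t)
  have hLconv : ∀ᵐ s, ∫ v, Real.exp (α * (s - v)) * L (s - v) ∂ρ = a := by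
    have hdom' : ∀ n s, |Real.exp (α * s) * f n s|
        ≤ C * (Real.exp (ε * s) + Real.exp (-ε * s)) := fun n s => by
      rw [abs_of_nonneg (mul_nonneg (Real.exp_pos _).le (hf₀ n s))]
      exact hdom n s
    filter_upwards [ae_tendsto_integral_sub hexp hexp' (fun n => by have := hf n; fun_prop) hdom'
      hL.countable_not_continuousAt fun s hs => (hlim s (not_not.1 hs)).const_mul _] with s hs
    exact tendsto_nhds_unique hs (hconv s)
  refine eq_exp_div_of_integral_sub_eq (memLp_id_of_integrable_exp hε hexp hexp') hne
    hL.measurable (B := B) (fun s => ?_) hLconv hs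
  rw [abs_of_nonneg (hL₀ s)]
  exact hLB s

theorem exists_subseq_tendsto_of_tendsto_integral_sub {α ε C B a : ℝ} (hα : 0 ≤ α) (ha : 0 ≤ a)
    (hε : ε ≠ 0) (hexp : Integrable (fun v => Real.exp (ε * v)) ρ)
    (hexp' : Integrable (fun v => Real.exp (-ε * v)) ρ) (hne : ∀ t, charFun ρ t ≠ 0)
    {f : ℕ → ℝ → ℝ} (hf : ∀ n, Antitone (f n)) (hf₀ : ∀ n s, 0 ≤ f n s)
    (hdom : ∀ n s, Real.exp (α * s) * f n s ≤ C * (Real.exp (ε * s) + Real.exp (-ε * s)))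
    (hbd : ∀ s, ∀ᶠ n in atTop, f n s ≤ B * Real.exp (-(α * s)))
    (hconv : ∀ s, Tendsto (fun n => ∫ v, Real.exp (α * (s - v)) * f n (s - v) ∂ρ) atTop (𝓝 a)) :
    ∃ φ : ℕ → ℕ, StrictMono φ ∧ ∀ s,
      Tendsto (fun n => f (φ n) s) atTop (𝓝 (a / ρ.real Set.univ * Real.exp (-(α * s)))) := by
  obtain ⟨φ, hφ, L, hL, hlim⟩ := exists_subseq_tendsto_of_antitone hf (fun s => by
    refine ⟨C * (Real.exp (ε * s) + Real.exp (-ε * s)) / Real.exp (α * s), fun n => ?_⟩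
    rw [abs_of_nonneg (hf₀ n s), le_div_iff₀' (Real.exp_pos _)]
    exact hdom n s)
  have hLval : ∀ s, ContinuousAt L s → L s = a / ρ.real Set.univ * Real.exp (-(α * s)) :=
    fun s hs => limit_eq_exp_of_tendsto_integral_sub hε hexp hexp' hne
      (fun n => (hf (φ n)).measurable) (fun n => hf₀ _) (fun n => hdom _)
      (fun s => hφ.tendsto_atTop.eventually (hbd s))
      (fun s => (hconv s).comp hφ.tendsto_atTop) hL hlim hs
  have hlim' : ∀ s, ContinuousAt L s → Tendsto (fun n => f (φ n) s) atTop
      (𝓝 (a / ρ.real Set.univ * Real.exp (-(α * s)))) := fun s hs => hLval s hs ▸ hlim s hs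
  have hanti : Antitone fun s => a / ρ.real Set.univ * Real.exp (-(α * s)) := fun s t hst => by
    dsimp only
    gcongr
  refine ⟨φ, hφ, fun s => tendsto_of_antitone_of_dense (fun n => hf (φ n))
    (dense_setOf_continuousAt hL) (fun t => hlim' t t.2) (fun t s hts => hanti hts.le)
    (fun t s hst => hanti hst.le) (by fun_prop)⟩

theorem PotterBound.exp_mul_logRatio_le {F G : ℝ → ℝ} {α δ C x₀ x : ℝ}
    (hF : PotterBound F G α δ C x₀) (hx : x₀ ≤ x) (hGx : 0 < G x) (s : ℝ) :
    Real.exp (α * s) * logRatio F G x s ≤ C * (Real.exp (δ * s) + Real.exp (-δ * s)) := by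
  have hle := hF x hx (Real.exp (-s)) (Real.exp_pos _)
  rw [Real.exp_neg, div_inv_eq_mul, ← Real.exp_neg, mul_right_comm, ← div_le_iff₀ hGx,
    twoSidedPow, ← Real.exp_mul, ← Real.exp_mul] at hle
  calc Real.exp (α * s) * logRatio F G x s
      ≤ Real.exp (α * s) * (C * (Real.exp (-s * (α + δ)) + Real.exp (-s * (α - δ)))) := by
        gcongr
        exact hle
    _ = C * (Real.exp (δ * s) + Real.exp (-δ * s)) := by
        rw [mul_left_comm, mul_add, ← Real.exp_add, ← Real.exp_add, add_comm (Real.exp _)]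
        congr 3 <;> ring

theorem RegVarying.eventually_logRatio_le {F G : ℝ → ℝ} {α η p B : ℝ} (hG : RegVarying G (-α))
    (hη : 0 < η) (hp : 0 < p) (hFG : ∀ z > 0, p * F z ≤ G (η * z)) (hB : η ^ (-α) / p < B)
    (s : ℝ) : ∀ᶠ x in atTop, logRatio F G x s ≤ B * Real.exp (-(α * s)) := by
  have hs := Real.exp_pos s
  have hlim := (hG.2 (η * Real.exp s) (by positivity)).div_const p
  have hlt : (η * Real.exp s) ^ (-α) / p < B * Real.exp (-(α * s)) := by
    rw [Real.mul_rpow hη.le hs.le, ← Real.exp_mul, mul_div_right_comm, mul_comm s, neg_mul]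
    gcongr
  filter_upwards [hlim.eventually (gt_mem_nhds hlt), eventually_gt_atTop 0] with x hxB hx
  have hGx := hG.1 x hx
  calc logRatio F G x s ≤ G (η * (x * Real.exp s)) / p / G x := by
        rw [logRatio]
        gcongr
        exact (le_div_iff₀' hp).2 (hFG _ (by positivity))
    _ = G (η * Real.exp s * x) / G x / p := by rw [div_right_comm, mul_comm x, mul_assoc]
    _ ≤ B * Real.exp (-(α * s)) := hxB.le

theorem RegVarying.tendsto_div_of_tendsto_integral_logRatio {F G : ℝ → ℝ} {α δ C x₀ η p : ℝ}
    (hG : RegVarying G (-α)) (hα : 0 ≤ α) (hδ : δ ≠ 0)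
    (hexp : Integrable (fun v => Real.exp (δ * v)) ρ)
    (hexp' : Integrable (fun v => Real.exp (-δ * v)) ρ) (hne : ∀ t, charFun ρ t ≠ 0)
    (hF : Antitone F) (hF₀ : ∀ x, 0 ≤ F x) (hpot : PotterBound F G α δ C x₀) (hx₀ : 0 < x₀)
    (hη : 0 < η) (hp : 0 < p) (hFG : ∀ z > 0, p * F z ≤ G (η * z))
    (hconv : ∀ s, Tendsto
      (fun x => ∫ v, Real.exp (α * (s - v)) * logRatio F G x (s - v) ∂ρ) atTop (𝓝 1)) :
    Tendsto (fun x => F x / G x) atTop (𝓝 (ρ.real Set.univ)⁻¹) := by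
  refine tendsto_of_subseq_tendsto fun x hx => ?_
  obtain ⟨N, hN⟩ := eventually_atTop.1 (hx.eventually (eventually_ge_atTop x₀))
  have hge : ∀ n, x₀ ≤ x (n + N) := fun n => hN _ (Nat.le_add_left _ _)
  have hlim : Tendsto (fun n => x (n + N)) atTop atTop := hx.comp (tendsto_add_atTop_nat N)
  have hGpos : ∀ n, 0 < G (x (n + N)) := fun n => hG.1 _ (hx₀.trans_le (hge n))
  obtain ⟨φ, -, hφ⟩ := exists_subseq_tendsto_of_tendsto_integral_sub hα zero_le_one hδ hexp hexp'
    hne (f := fun n => logRatio F G (x (n + N)))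
    (fun n => antitone_logRatio hF (hx₀.le.trans (hge n)) (hGpos n).le)
    (fun n => logRatio_nonneg hF₀ (hGpos n).le)
    (fun n => hpot.exp_mul_logRatio_le (hge n) (hGpos n))
    (fun s => hlim.eventually (hG.eventually_logRatio_le hη hp hFG (lt_add_one _) s))
    (fun s => (hconv s).comp hlim)
  refine ⟨fun n => φ n + N, ?_⟩
  simpa [logRatio] using hφ 0

end TauberianLimit

section RandomlyWeightedSeries

variable {P : Measure Ω} {X Θ : ℕ → Ω → ℝ} {F : ℝ → ℝ} {α δ r C x₀ : ℝ}

theorem exists_pos_measureReal_lt_pos [IsProbabilityMeasure P] {Y : Ω → ℝ}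
    (hY : ∀ᵐ ω ∂P, 0 < Y ω) : ∃ η > 0, 0 < P.real {ω | η < Y ω} := by
  by_contra! hle
  have hsmall : ∀ᵐ ω ∂P, ∀ n : ℕ, ¬ 1 / ((n : ℝ) + 1) < Y ω := ae_all_iff.2 fun n => by
    have hzero := le_antisymm (hle (1 / ((n : ℝ) + 1)) (by positivity)) measureReal_nonneg
    rw [measureReal_eq_zero_iff] at hzero
    simpa only [ae_iff, not_not] using hzero
  obtain ⟨ω, hω, hωn⟩ := (hY.and hsmall).exists
  obtain ⟨n, hn⟩ := exists_nat_one_div_lt hω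
  exact hωn n hn

theorem antitone_seriesTail [IsFiniteMeasure P] (Z : ℕ → Ω → ℝ) : Antitone (seriesTail P Z) :=
  fun _ _ hxy => measureReal_mono fun _ hω => (ENNReal.ofReal_le_ofReal hxy).trans_lt hω

theorem measureReal_mul_tailP_le_seriesTail [IsFiniteMeasure P] {t : ℕ}
    (h : IndepFun (Θ t) (X t) P) {η z : ℝ} (hη : 0 < η) (hz : 0 < z) :
    P.real {ω | η < Θ t ω} * tailP P (X t) z
      ≤ seriesTail P (fun t ω => Θ t ω * X t ω) (η * z) := by
  calc P.real {ω | η < Θ t ω} * tailP P (X t) z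
      = P.real (Θ t ⁻¹' Set.Ioi η ∩ X t ⁻¹' Set.Ioi z) := by
        rw [Measure.real, Measure.real, h.measure_inter_preimage_eq_mul _ _ measurableSet_Ioi
          measurableSet_Ioi, ENNReal.toReal_mul]
        rfl
    _ ≤ P.real (⋃ s ∈ ({t} : Finset ℕ), {ω | η * z < Θ s ω * X s ω}) := by
        refine measureReal_mono (fun ω ⟨(hΘ : η < Θ t ω), (hX : z < X t ω)⟩ => ?_)
          (measure_ne_top _ _)
        simp only [Finset.mem_singleton, Set.iUnion_iUnion_eq_left]
        exact mul_lt_mul'' hΘ hX hη.le hz.le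
    _ ≤ _ := measureReal_biUnion_lt_le_seriesTail _ _ (by positivity)

theorem tsum_twoSidedMom_ne_top (hr : 1 ≤ r) (hM : ∑' t, twoSidedMom P (Θ t) α δ ^ (1 / r) ≠ ⊤) :
    ∑' t, twoSidedMom P (Θ t) α δ ≠ ⊤ :=
  ne_top_of_le_ne_top (ENNReal.rpow_ne_top_of_nonneg (by linarith) hM)
    (tsum_le_rpow_tsum_rpow _ hr)

theorem tsum_momE_ne_top (hΘ : ∀ t, ∀ᵐ ω ∂P, 0 < Θ t ω)
    (hM : ∑' t, twoSidedMom P (Θ t) α δ ≠ ⊤) {b : ℝ} (hb : |b| ≤ δ) :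
    ∑' t, momE P (Θ t) (α + b) ≠ ⊤ :=
  ne_top_of_le_ne_top hM (ENNReal.tsum_le_tsum fun t => momE_add_le_twoSidedMom (hΘ t) hb)

theorem tendsto_tsum_measureReal_mul_div_seriesTail [IsFiniteMeasure P] {ρ : ℝ}
    (hX : ∀ t, Measurable (X t)) (hΘ : ∀ t, Measurable (Θ t))
    (hXpos : ∀ t, ∀ᵐ ω ∂P, 0 < X t ω) (hΘpos : ∀ t, ∀ᵐ ω ∂P, 0 < Θ t ω)
    (hF : ∀ t, tailP P (X t) = F) (hpair : ∀ s t, s ≠ t → AsympIndep P (X s) (X t))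
    (hindep : IndepFun (fun ω t => Θ t ω) (fun ω t => X t ω) P)
    (hRV : RegVarying (seriesTail P fun t ω => Θ t ω * X t ω) ρ)
    (hpot : PotterBound F (seriesTail P fun t ω => Θ t ω * X t ω) α δ C x₀) (hC : 0 ≤ C)
    (hx₀ : 0 < x₀) (hδ : 0 ≤ δ) (hr : 1 ≤ r) (hκ : α + δ < r)
    (hM : ∑' t, twoSidedMom P (Θ t) α δ ^ (1 / r) ≠ ⊤) :
    Tendsto (fun x => (∑' t, P.real {ω | x < Θ t ω * X t ω}) /
      seriesTail P (fun t ω => Θ t ω * X t ω) x) atTop (𝓝 1) := by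
  have hpot' : ∀ t, PotterBound (tailP P (X t)) (seriesTail P fun t ω => Θ t ω * X t ω) α δ C x₀ :=
    fun t => (hF t).symm ▸ hpot
  have hfin : ∀ t, twoSidedMom P (Θ t) α δ ≠ ⊤ :=
    ENNReal.ne_top_of_tsum_ne_top (tsum_twoSidedMom_ne_top hr hM)
  have hdom : TailDominated P (fun t ω => Θ t ω * X t ω) (seriesTail P fun t ω => Θ t ω * X t ω)
      (α + δ) x₀ fun t => ENNReal.ofReal (2 * C) * twoSidedMom P (Θ t) α δ :=
    fun t x hx u hu => (hpot' t).measure_lt_mul_le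
      (hindep.comp (measurable_pi_apply t) (measurable_pi_apply t)) (hΘ t) (hX t) (hΘpos t) hδ hC
      (fun _ => measureReal_nonneg) hx hu
  refine hdom.tendsto_tsum_measureReal_div_seriesTail (fun t => (hΘ t).mul (hX t)) (fun t => ?_)
    hRV hr hκ ?_ hx₀ fun s t hst => ?_
  · filter_upwards [hΘpos t, hXpos t] with ω hθ hx using (mul_pos hθ hx).le
  · simp_rw [ENNReal.mul_rpow_of_nonneg _ _ (show 0 ≤ 1 / r by positivity)]
    rw [ENNReal.tsum_mul_left]
    exact ENNReal.mul_ne_top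
      (ENNReal.rpow_ne_top_of_nonneg (by positivity) ENNReal.ofReal_ne_top) hM
  · exact (hpot' s).tendsto_measureReal_lt_mul_and_lt_mul_div
      (hindep.comp (φ := fun f : ℕ → ℝ => (f s, f t)) (ψ := fun f : ℕ → ℝ => (f s, f t))
        (by fun_prop) (by fun_prop))
      (hΘ s) (hΘ t) (hX s) (hX t) (hΘpos s) (hΘpos t) hC hRV.1 (hpair s t hst) (hfin s) (hfin t)

theorem RegVarying.tendsto_integral_logRatio_mellinMeasure [IsProbabilityMeasure P] {G : ℝ → ℝ}
    (hG : RegVarying G (-α)) (hX : ∀ t, Measurable (X t)) (hΘ : ∀ t, Measurable (Θ t))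
    (hΘpos : ∀ t, ∀ᵐ ω ∂P, 0 < Θ t ω) (hindep : ∀ t, IndepFun (Θ t) (X t) P)
    (hF : ∀ t, tailP P (X t) = F)
    (hsum : Tendsto (fun x => (∑' t, P.real {ω | x < Θ t ω * X t ω}) / G x) atTop (𝓝 1)) (s : ℝ) :
    Tendsto (fun x => ∫ v, Real.exp (α * (s - v)) * logRatio F G x (s - v) ∂mellinMeasure P Θ α)
      atTop (𝓝 1) := by
  have hs := Real.exp_pos s
  have hscale : Tendsto (fun x => Real.exp s * x) atTop atTop := tendsto_id.const_mul_atTop hs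
  have hlim := ((hsum.comp hscale).mul (hG.2 _ hs)).const_mul (Real.exp (α * s))
  have hone : Real.exp (α * s) * (1 * Real.exp s ^ (-α)) = 1 := by
    rw [one_mul, ← Real.exp_mul, ← Real.exp_add, mul_comm s, neg_mul, add_neg_cancel,
      Real.exp_zero]
  rw [hone] at hlim
  refine hlim.congr' ?_
  filter_upwards [eventually_gt_atTop 0] with x hx
  have hGx := hG.1 x hx
  have hGsx := hG.1 (Real.exp s * x) (by positivity)
  rw [integral_exp_mul_logRatio_mellinMeasure hΘ hX hΘpos hindep hF hGx, Function.comp_apply]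
  field_simp

theorem isFiniteMeasure_mellinMeasure (hΘ : ∀ t, Measurable (Θ t))
    (hΘpos : ∀ t, ∀ᵐ ω ∂P, 0 < Θ t ω) (hfin : ∑' t, momE P (Θ t) α ≠ ⊤) :
    IsFiniteMeasure (mellinMeasure P Θ α) :=
  ⟨mellinMeasure_univ (α := α) hΘ hΘpos ▸ hfin.lt_top⟩

theorem RWConditions.toReal_tsum_momE_pos [NeZero P] (h : RWConditions P Θ α)
    (hΘ : ∀ t, Measurable (Θ t)) (hΘpos : ∀ t, ∀ᵐ ω ∂P, 0 < Θ t ω) :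
    0 < (∑' t, momE P (Θ t) α).toReal := by
  obtain ⟨δ, r, hδ, -, hr, -, hM⟩ := h.exists_exponents hΘ hΘpos
  have hfin := tsum_momE_ne_top (b := 0) hΘpos (tsum_twoSidedMom_ne_top hr hM)
    (by rw [abs_zero]; exact hδ.le)
  rw [add_zero] at hfin
  refine ENNReal.toReal_pos (fun hzero => ?_) hfin
  have hΘ₀ := hΘ 0
  have hae := (lintegral_eq_zero_iff (by fun_prop)).1 (ENNReal.tsum_eq_zero.1 hzero 0)
  obtain ⟨ω, hω, hωpos⟩ := (hae.and (hΘpos 0)).exists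
  exact (ENNReal.ofReal_pos.2 (Real.rpow_pos_of_pos hωpos α)).ne' hω

theorem tendsto_tailP_div_seriesTail [IsProbabilityMeasure P] (hα : 0 ≤ α)
    (hX : ∀ t, Measurable (X t)) (hΘ : ∀ t, Measurable (Θ t))
    (hXpos : ∀ t, ∀ᵐ ω ∂P, 0 < X t ω) (hΘpos : ∀ t, ∀ᵐ ω ∂P, 0 < Θ t ω)
    (hF : ∀ t, tailP P (X t) = F) (hpair : ∀ s t, s ≠ t → AsympIndep P (X s) (X t))
    (hindep : IndepFun (fun ω t => Θ t ω) (fun ω t => X t ω) P)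
    (hRV : RegVarying (seriesTail P fun t ω => Θ t ω * X t ω) (-α)) (hRW : RWConditions P Θ α)
    (hmellin : ∀ β : ℝ, ∑' t, ∫ ω, Complex.exp
      (((α : ℂ) + (β : ℂ) * Complex.I) * (Real.log (Θ t ω) : ℂ)) ∂P ≠ 0) :
    Tendsto (fun x => F x / seriesTail P (fun t ω => Θ t ω * X t ω) x) atTop
      (𝓝 (∑' t, momE P (Θ t) α).toReal⁻¹) := by
  obtain ⟨δ, r, hδ, hδα, hr, hκ, hM⟩ := hRW.exists_exponents hΘ hΘpos
  have hindep' : ∀ t, IndepFun (Θ t) (X t) P := fun t =>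
    hindep.comp (measurable_pi_apply t) (measurable_pi_apply t)
  obtain rfl := hF 0
  obtain ⟨η, hη, hp⟩ := exists_pos_measureReal_lt_pos (hΘpos 0)
  have hle : ∀ z > 0, P.real {ω | η < Θ 0 ω} * tailP P (X 0) z
      ≤ seriesTail P (fun t ω => Θ t ω * X t ω) (η * z) :=
    fun z hz => measureReal_mul_tailP_le_seriesTail (hindep' 0) hη hz
  obtain ⟨C, hC, x₀, hx₀, hpot⟩ := hRV.exists_potterBound_of_mul_le (antitone_seriesTail _)
    (fun _ => measureReal_le_one) hδ hδα hη hp hle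
  have hmom : ∀ b, |b| ≤ δ → ∑' t, momE P (Θ t) (α + b) ≠ ⊤ := fun b =>
    tsum_momE_ne_top hΘpos (tsum_twoSidedMom_ne_top hr hM)
  have : IsFiniteMeasure (mellinMeasure P Θ α) := isFiniteMeasure_mellinMeasure hΘ hΘpos
    (add_zero α ▸ hmom 0 (by rw [abs_zero]; exact hδ.le))
  have hsum := tendsto_tsum_measureReal_mul_div_seriesTail hX hΘ hXpos hΘpos hF hpair hindep hRV
    hpot hC.le hx₀ hδ.le hr hκ hM
  rw [← mellinMeasure_univ (α := α) hΘ hΘpos]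
  exact hRV.tendsto_div_of_tendsto_integral_logRatio hα hδ.ne'
    (integrable_exp_mellinMeasure hΘ hΘpos (hmom δ (abs_of_pos hδ).le))
    (integrable_exp_mellinMeasure hΘ hΘpos (hmom (-δ) (by rw [abs_neg, abs_of_pos hδ])))
    (fun β => (charFun_mellinMeasure (α := α) hΘ hΘpos β).symm ▸ hmellin β) (antitone_tailP _)
    (tailP_nonneg _) hpot hx₀ hη hp hle
    (hRV.tendsto_integral_logRatio_mellinMeasure hX hΘ hΘpos hindep' hF hsum)

end RandomlyWeightedSeries

/-- Theorem 4.5 (main converse result): under the setup of Proposition 4.4, if moreover the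
Mellin transform `Σ_t E[Θ_t^{α+iβ}]` never vanishes (`β ∈ ℝ`), then `X₁` has a regularly
varying tail of index `-α` and `P[X_(∞) > x] ~ P[X₁ > x]·Σ_t E[Θ_t^α]` as `x → ∞`. -/
theorem stmt3 {Ω : Type*} [MeasurableSpace Ω] (P : Measure Ω) [IsProbabilityMeasure P]
    (X Θ : ℕ → Ω → ℝ) (α : ℝ) (hα : 0 < α)
    (hXmeas : ∀ t, Measurable (X t)) (hΘmeas : ∀ t, Measurable (Θ t))
    (hXpos : ∀ t, ∀ᵐ ω ∂P, 0 < X t ω) (hΘpos : ∀ t, ∀ᵐ ω ∂P, 0 < Θ t ω)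
    (hident : ∀ t, IdentDistrib (X t) (X 0) P P)
    (hpair : ∀ s t : ℕ, s ≠ t → AsympIndep P (X s) (X t))
    (hindep : IndepFun (fun ω => fun t => Θ t ω) (fun ω => fun t => X t ω) P)
    (hfin : ∀ᵐ ω ∂P, (∑' t : ℕ, ENNReal.ofReal (Θ t ω * X t ω)) ≠ ⊤)
    (hRV : RegVarying
      (fun x : ℝ =>
        (P {ω | ENNReal.ofReal x < ∑' t : ℕ, ENNReal.ofReal (Θ t ω * X t ω)}).toReal)
      (-α))
    (hRW : RWConditions P Θ α)
    (hmellin : ∀ β : ℝ,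
      (∑' t : ℕ, ∫ ω, Complex.exp
          (((α : ℂ) + (β : ℂ) * Complex.I) * (Real.log (Θ t ω) : ℂ)) ∂P) ≠ 0) :
    RegVarying (tailP P (X 0)) (-α) ∧
      Tendsto (fun x : ℝ =>
          (P {ω | ENNReal.ofReal x < ∑' t : ℕ, ENNReal.ofReal (Θ t ω * X t ω)}).toReal /
            (tailP P (X 0) x * (∑' t : ℕ, momE P (Θ t) α).toReal))
        atTop (nhds 1) := by
  have hm := hRW.toReal_tsum_momE_pos hΘmeas hΘpos
  have hlim := tendsto_tailP_div_seriesTail hα.le hXmeas hΘmeas hXpos hΘpos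
    (fun t => tailP_eq_of_identDistrib (hident t)) hpair hindep hRV hRW hmellin
  refine ⟨hRV.of_tendsto_div (antitone_tailP _) (inv_pos.2 hm) hlim, ?_⟩
  have hratio := (hlim.mul_const (∑' t, momE P (Θ t) α).toReal).inv₀
    (by rw [inv_mul_cancel₀ hm.ne']; exact one_ne_zero)
  rw [inv_mul_cancel₀ hm.ne', inv_one] at hratio
  refine hratio.congr fun x => ?_
  rw [div_mul_eq_mul_div, inv_div, seriesTail]
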